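/- arXiv:1304.5775 — 3 statements merged into one kernel-verified Lean document; each statement's English description precedes it below -/
import Mathlib

section
/- Let I be the radical bihomogeneous ideal of a finite set Z = {P₁,…,P_s} of distinct points of X = ℙ¹×ℙ¹. Assume that α*(I^{(6)}) = α*(I^{(5)}) + 1 = α*(I^{(4)}) + 2 = α*(I^{(3)}) + 3 = α*(I^{(2)}) + 4 = α*(I) + 5, i.e. the invariant α* jumps by exactly 1 in five consecutive steps. Then α*(I) = 1; that is, Z is contained in a divisor of bidegree (1,1). -/
open MvPolynomial

noncomputable section

/-- The bi-graded polynomial ring `ℂ[x₀,x₁,y₀,y₁]`: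
the first `Fin 2` summand indexes the variables `x₀,x₁`,
the second the variables `y₀,y₁`. -/
abbrev R4 : Type := MvPolynomial (Fin 2 ⊕ Fin 2) ℂ

/-- The weight function giving the bi-grading of `R4`. -/
def biWeight : Fin 2 ⊕ Fin 2 → ℕ × ℕ := Sum.elim (fun _ => (1, 0)) (fun _ => (0, 1))

/-- `F` is a (possibly zero) form of bidegree `(p,q)`, i.e. homogeneous of degree `p`
in `x₀,x₁` and homogeneous of degree `q` in `y₀,y₁`. -/
def IsBiForm (F : R4) (p q : ℕ) : Prop :=
  IsWeightedHomogeneous biWeight F (p, q)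

/-- The projective line `ℙ¹` over `ℂ`. -/
abbrev ProjLine := Projectivization ℂ (Fin 2 → ℂ)

/-- The bi-homogeneous prime ideal of a point `P = ([a:b],[c:d])` of `X = ℙ¹ × ℙ¹`,
generated by `b·x₀ - a·x₁` and `d·y₀ - c·y₁`. -/
def pointIdeal (P : ProjLine × ProjLine) : Ideal R4 :=
  Ideal.span
    { C (P.1.rep 1) * X (Sum.inl 0) - C (P.1.rep 0) * X (Sum.inl 1),
      C (P.2.rep 1) * X (Sum.inr 0) - C (P.2.rep 0) * X (Sum.inr 1) }

/-- The `m`-th symbolic power of the radical ideal of the finite set of points `Z ⊂ X`: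
`I^{(m)} = ⋂_{P ∈ Z} I(P)^m`.  For `m = 1` this is the radical ideal `I = I(Z)` itself. -/
def symbPow (Z : Finset (ProjLine × ProjLine)) (m : ℕ) : Ideal R4 :=
  ⨅ P ∈ Z, pointIdeal P ^ m

/-- `α*(J)`: the least `t ≥ 0` such that `J` contains a nonzero form of bidegree `(t,t)`. -/
def alphaStar (J : Ideal R4) : ℕ :=
  sInf {t : ℕ | ∃ F ∈ J, F ≠ 0 ∧ IsBiForm F t t}

/-- `α⁺(J)`: the least `d ≥ 0` such that `J` contains a nonzero form of bidegree `(p,q)`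
with `p + q = d`. -/
def alphaPlus (J : Ideal R4) : ℕ :=
  sInf {d : ℕ | ∃ p q : ℕ, p + q = d ∧ ∃ F ∈ J, F ≠ 0 ∧ IsBiForm F p q}

/-- determinant of two plane vectors -/
def det2 (u v : Fin 2 → ℂ) : ℂ := u 0 * v 1 - u 1 * v 0

/-- linear form in the first set of variables vanishing at `v` -/
def lx (v : Fin 2 → ℂ) : R4 := C (v 1) * X (Sum.inl 0) - C (v 0) * X (Sum.inl 1)
/-- linear form in the second set of variables vanishing at `v` -/
def ly (v : Fin 2 → ℂ) : R4 := C (v 1) * X (Sum.inr 0) - C (v 0) * X (Sum.inr 1)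

/-- a complementary vector -/
def cpl (v : ProjLine) : Fin 2 → ℂ := if v.rep 0 = 0 then ![1, 0] else ![0, 1]

lemma det2_cpl (v : ProjLine) : det2 v.rep (cpl v) ≠ 0 := by
  unfold cpl det2
  split_ifs with h
  · have := v.rep_nonzero
    have h1 : v.rep 1 ≠ 0 := by
      intro h1
      apply this
      ext i; fin_cases i <;> simp [h, h1]
    simp [h1]
  · simp [h]

lemma det2_self (v : Fin 2 → ℂ) : det2 v v = 0 := by unfold det2; ring

lemma det2_comm (u v : Fin 2 → ℂ) : det2 u v = - det2 v u := by unfold det2; ring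

lemma det2_rep_ne {v w : ProjLine} (h : v ≠ w) : det2 v.rep w.rep ≠ 0 := by
  intro h0
  apply h
  rw [← v.mk_rep, ← w.mk_rep, Projectivization.mk_eq_mk_iff']
  unfold det2 at h0
  have hw := w.rep_nonzero
  by_cases h1 : w.rep 0 = 0
  · have h2 : w.rep 1 ≠ 0 := by
      intro h1
      apply hw
      ext i; fin_cases i <;> simp [*]
    refine ⟨v.rep 1 / w.rep 1, ?_⟩
    ext i; fin_cases i
    · simp [h1] at h0 ⊢
      rcases h0 with h0 | h0
      · exact h0.symm
      · exact absurd h0 h2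
    · simp; field_simp
  · refine ⟨v.rep 0 / w.rep 0, ?_⟩
    ext i; fin_cases i
    · simp; field_simp
    · simp; field_simp; linear_combination h0

lemma biform_inl (i : Fin 2) : IsBiForm (X (Sum.inl i)) 1 0 := by
  have := isWeightedHomogeneous_X ℂ biWeight (Sum.inl i : Fin 2 ⊕ Fin 2)
  exact this
lemma biform_inr (i : Fin 2) : IsBiForm (X (Sum.inr i)) 0 1 := by
  have := isWeightedHomogeneous_X ℂ biWeight (Sum.inr i : Fin 2 ⊕ Fin 2)
  exact this

lemma biform_lx (v) : IsBiForm (lx v) 1 0 :=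
  IsWeightedHomogeneous.sub ((biform_inl 0).C_mul _) ((biform_inl 1).C_mul _)
lemma biform_ly (v) : IsBiForm (ly v) 0 1 :=
  IsWeightedHomogeneous.sub ((biform_inr 0).C_mul _) ((biform_inr 1).C_mul _)

lemma IsBiForm.mul' {F G : R4} {p q p' q' : ℕ} (h : IsBiForm F p q) (h' : IsBiForm G p' q') :
    IsBiForm (F * G) (p + p') (q + q') := IsWeightedHomogeneous.mul h h'

lemma IsBiForm.pow' {F : R4} {p q : ℕ} (h : IsBiForm F p q) (n : ℕ) :
    IsBiForm (F ^ n) (n * p) (n * q) := by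
  have := IsWeightedHomogeneous.pow h n
  simpa [IsBiForm] using this

lemma quot_biform {F L K : R4} {p q i j : ℕ} (hF : IsBiForm F p q) (h0 : F ≠ 0)
    (hL : IsBiForm L i j) (h : F = L * K) : i ≤ p ∧ j ≤ q ∧ IsBiForm K (p - i) (q - j) := by
  let _ := MvPolynomial.weightedGradedAlgebra (R := ℂ) (w := biWeight)
  have hFd : (DirectSum.decompose (weightedHomogeneousSubmodule ℂ biWeight) F (p, q) : R4) = F :=
    DirectSum.decompose_of_mem_same _ hF
  have hle : (i, j) ≤ (p, q) := by
    by_contra hle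
    have := DirectSum.coe_decompose_mul_of_left_mem_of_not_le
      (𝒜 := weightedHomogeneousSubmodule ℂ biWeight) (b := K) hL hle
    rw [← h, hFd] at this
    exact h0 this
  have := DirectSum.coe_decompose_mul_of_left_mem_of_le
      (𝒜 := weightedHomogeneousSubmodule ℂ biWeight) (b := K) hL hle
  rw [← h, hFd, h] at this
  have hL0 : L ≠ 0 := by rintro rfl; simp at h; exact h0 h
  have := mul_left_cancel₀ hL0 this
  refine ⟨hle.1, hle.2, ?_⟩
  rw [this]
  exact (DirectSum.decompose (weightedHomogeneousSubmodule ℂ biWeight) K ((p, q) - (i, j))).2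

/-- local expansion at `P` -/
def DP (P : ProjLine × ProjLine) : R4 →ₐ[ℂ] MvPowerSeries (Fin 2) ℂ :=
  aeval (Sum.elim
    (fun i => MvPowerSeries.C (P.1.rep i) + MvPowerSeries.C (cpl P.1 i) * MvPowerSeries.X 0)
    (fun i => MvPowerSeries.C (P.2.rep i) + MvPowerSeries.C (cpl P.2 i) * MvPowerSeries.X 1))

/-- order of vanishing at P -/
def ordP (P : ProjLine × ProjLine) (F : R4) : ℕ∞ := (DP P F).order

/-- evaluation at chosen representatives -/
def evP (P : ProjLine × ProjLine) : R4 →ₐ[ℂ] ℂ := aeval (Sum.elim P.1.rep P.2.rep)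

lemma DP_C (P) (c : ℂ) : DP P (C c) = MvPowerSeries.C c := by
  have := (DP P).commutes c
  exact this

lemma DP_lx (P) (v) : DP P (lx v) = MvPowerSeries.C (det2 P.1.rep v) +
    MvPowerSeries.C (det2 (cpl P.1) v) * MvPowerSeries.X 0 := by
  simp only [lx, map_sub, map_mul, DP_C]
  simp only [DP, aeval_X, Sum.elim_inl, det2, map_sub, map_mul]
  ring
lemma DP_ly (P) (v) : DP P (ly v) = MvPowerSeries.C (det2 P.2.rep v) +
    MvPowerSeries.C (det2 (cpl P.2) v) * MvPowerSeries.X 1 := by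
  simp only [ly, map_sub, map_mul, DP_C]
  simp only [DP, aeval_X, Sum.elim_inr, det2, map_sub, map_mul]
  ring

lemma const_DP (P F) : MvPowerSeries.constantCoeff (DP P F) = evP P F := by
  have : ((MvPowerSeries.constantCoeff (σ := Fin 2) (R := ℂ)).comp (DP P).toRingHom) =
      (evP P).toRingHom := by
    apply MvPolynomial.ringHom_ext
    · intro c
      change MvPowerSeries.constantCoeff (DP P (C c)) = evP P (C c)
      rw [DP_C]; simp [evP]
    · rintro (i | i) <;> simp [evP, DP]
  exact congrArg (fun f => f F) this

lemma ordP_mul (P F G) : ordP P (F * G) = ordP P F + ordP P G := by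
  simp [ordP, MvPowerSeries.order_mul]

lemma one_le_ordP {P F} : 1 ≤ ordP P F ↔ evP P F = 0 := by
  rw [ordP, MvPowerSeries.one_le_order_iff_constCoeff_eq_zero, const_DP]

lemma ordP_eq_zero {P F} : ordP P F = 0 ↔ evP P F ≠ 0 := by
  rw [ne_eq, ← one_le_ordP, Order.one_le_iff_ne_zero, not_not]

lemma evP_lx (P v) : evP P (lx v) = det2 P.1.rep v := by
  simp [evP, lx, det2]; ring
lemma evP_ly (P v) : evP P (ly v) = det2 P.2.rep v := by
  simp [evP, ly, det2]; ring

lemma pointIdeal_eq (P) : pointIdeal P = Ideal.span {lx P.1.rep, ly P.2.rep} := rfl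

lemma le_ordP_of_mem {P F} {m : ℕ} (h : F ∈ pointIdeal P ^ m) : (m : ℕ∞) ≤ ordP P F := by
  have hI : (pointIdeal P).map (DP P) ≤ RingHom.ker (MvPowerSeries.constantCoeff (σ := Fin 2) (R := ℂ)) := by
    rw [pointIdeal_eq, Ideal.map_span, Ideal.span_le]
    rintro _ ⟨f, (rfl | rfl), rfl⟩
    · simp [DP_lx, det2_self]
    · simp [DP_ly, det2_self]
  have h1 : DP P F ∈ (RingHom.ker (MvPowerSeries.constantCoeff (σ := Fin 2) (R := ℂ))) ^ m := by
    have := Ideal.mem_map_of_mem (DP P) h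
    rw [Ideal.map_pow] at this
    exact Ideal.pow_right_mono hI m this
  unfold ordP
  generalize DP P F = f at h1
  clear h hI
  induction m generalizing f with
  | zero => simp
  | succ n ih =>
    rw [pow_succ] at h1
    refine Submodule.mul_induction_on h1 ?_ ?_
    · intro a ha b hb
      have := ih a ha
      have hb1 : 1 ≤ b.order := MvPowerSeries.one_le_order_iff_constCoeff_eq_zero.2 hb
      rw [MvPowerSeries.order_mul]
      push_cast
      exact add_le_add this hb1
    · intro a b ha hb
      exact le_trans (le_min ha hb) (MvPowerSeries.min_order_le_add)

lemma mem_of_evP {P F} {p q : ℕ} (hF : IsBiForm F p q) (h : evP P F = 0) : F ∈ pointIdeal P := by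
  obtain ⟨c, hc⟩ : ∃ c : ℂ, c * det2 P.1.rep (cpl P.1) = 1 := ⟨_, inv_mul_cancel₀ (det2_cpl _)⟩
  obtain ⟨d, hd⟩ : ∃ c : ℂ, c * det2 P.2.rep (cpl P.2) = 1 := ⟨_, inv_mul_cancel₀ (det2_cpl _)⟩
  let l : R4 := C c * lx (cpl P.1)
  let l' : R4 := C d * ly (cpl P.2)
  let π : R4 →ₐ[ℂ] R4 := aeval (Sum.elim (fun i => C (P.1.rep i) * l) (fun i => C (P.2.rep i) * l'))
  have h1 : π F = C (evP P F) * (l ^ p * l' ^ q) := by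
    have hmon : ∀ m ∈ F.support, π (monomial m (coeff m F)) =
        C (evP P (monomial m (coeff m F))) * (l ^ p * l' ^ q) := by
      intro m hm
      have hw := hF (mem_support_iff.1 hm)
      have hp : m (Sum.inl 0) + m (Sum.inl 1) = p ∧ m (Sum.inr 0) + m (Sum.inr 1) = q := by
        rw [Finsupp.weight_apply, Finsupp.sum_fintype _ _ (by simp)] at hw
        have h1 := congrArg Prod.fst hw
        have h2 := congrArg Prod.snd hw
        simp [biWeight, Fintype.sum_sum_type, Fin.sum_univ_two] at h1 h2
        exact ⟨h1, h2⟩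
      simp only [π, evP, aeval_monomial]
      rw [Finsupp.prod_fintype _ _ (by simp), Finsupp.prod_fintype _ _ (by simp)]
      simp only [Fintype.prod_sum_type, Fin.prod_univ_two, Sum.elim_inl, Sum.elim_inr,
        MvPolynomial.algebraMap_eq, Algebra.algebraMap_self, RingHom.id_apply, map_mul, map_pow]
      rw [← hp.1, ← hp.2]
      ring
    conv_lhs => rw [F.as_sum]
    conv_rhs => rw [F.as_sum]
    simp only [map_sum]
    rw [Finset.sum_mul]
    exact Finset.sum_congr rfl hmon
  have h2 : (Ideal.Quotient.mkₐ ℂ (pointIdeal P)).comp π = Ideal.Quotient.mkₐ ℂ (pointIdeal P) := by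
    apply MvPolynomial.algHom_ext
    have hx : lx P.1.rep ∈ pointIdeal P := Ideal.subset_span (by simp [lx])
    have hy : ly P.2.rep ∈ pointIdeal P := Ideal.subset_span (by simp [ly])
    rintro (i | i)
    · simp only [AlgHom.comp_apply, Ideal.Quotient.mkₐ_eq_mk, Ideal.Quotient.eq, π, aeval_X, Sum.elim_inl]
      have : (C (P.1.rep i) * l - X (Sum.inl i) : R4) =
          C (- c * cpl P.1 i) * lx P.1.rep * (-1) + X (Sum.inl i) * (C (c * det2 P.1.rep (cpl P.1)) - 1) := by
        fin_cases i <;> simp [l, lx, det2] <;> ring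
      rw [this, hc]
      simp only [map_one, sub_self, mul_zero, add_zero]
      exact Ideal.mul_mem_right _ _ (Ideal.mul_mem_left _ _ hx)
    · simp only [AlgHom.comp_apply, Ideal.Quotient.mkₐ_eq_mk, Ideal.Quotient.eq, π, aeval_X, Sum.elim_inr]
      have : (C (P.2.rep i) * l' - X (Sum.inr i) : R4) =
          C (- d * cpl P.2 i) * ly P.2.rep * (-1) + X (Sum.inr i) * (C (d * det2 P.2.rep (cpl P.2)) - 1) := by
        fin_cases i <;> simp [l', ly, det2] <;> ring
      rw [this, hd]
      simp only [map_one, sub_self, mul_zero, add_zero]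
      exact Ideal.mul_mem_right _ _ (Ideal.mul_mem_left _ _ hy)
  have h3 := congrArg (fun f => f F) h2
  simp only [AlgHom.comp_apply, h1, h] at h3
  simp at h3
  exact Ideal.Quotient.eq_zero_iff_mem.1 h3.symm

/-- forms of bidegree (p,q) -/
def SS (p q : ℕ) : Submodule ℂ R4 := weightedHomogeneousSubmodule ℂ biWeight (p, q)

lemma mem_SS {p q F} : F ∈ SS p q ↔ IsBiForm F p q := Iff.rfl

lemma weight_bi (m : Fin 2 ⊕ Fin 2 →₀ ℕ) : Finsupp.weight biWeight m =
    (m (Sum.inl 0) + m (Sum.inl 1), m (Sum.inr 0) + m (Sum.inr 1)) := by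
  rw [Finsupp.weight_apply, Finsupp.sum_fintype _ _ (by simp)]
  ext <;> simp [biWeight, Fintype.sum_sum_type, Fin.sum_univ_two]

/-- exponents -/
def expEquiv (p q : ℕ) : Fin (p + 1) × Fin (q + 1) ≃
    {d : Fin 2 ⊕ Fin 2 →₀ ℕ | Finsupp.weight biWeight d = (p, q)} where
  toFun x := ⟨Finsupp.equivFunOnFinite.symm
      (Sum.elim ![(x.1 : ℕ), p - x.1] ![(x.2 : ℕ), q - x.2]), by
        have := x.1.2
        have := x.2.2
        simp only [Set.mem_ofPred_eq, weight_bi]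
        ext <;> simp <;> omega⟩
  invFun d := (⟨d.1 (Sum.inl 0), by
      have := d.2
      simp only [Set.mem_ofPred_eq, weight_bi, Prod.mk.injEq] at this
      omega⟩, ⟨d.1 (Sum.inr 0), by
      have := d.2
      simp only [Set.mem_ofPred_eq, weight_bi, Prod.mk.injEq] at this
      omega⟩)
  left_inv x := by ext <;> simp
  right_inv d := by
    have := d.2
    simp only [Set.mem_ofPred_eq, weight_bi, Prod.mk.injEq] at this
    ext (i | i) <;> fin_cases i <;> simp <;> omega

/-- linear equivalence of SS with finitely supported functions -/
def SSequiv (p q : ℕ) : SS p q ≃ₗ[ℂ] ((Fin (p + 1) × Fin (q + 1)) →₀ ℂ) :=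
  (LinearEquiv.ofEq _ _ (weightedHomogeneousSubmodule_eq_finsupp_supported ℂ biWeight (p, q))).trans
    ((AddMonoidAlgebra.supportedEquivFinsupp _).trans (Finsupp.domLCongr (expEquiv p q).symm))

instance (p q : ℕ) : Module.Finite ℂ (SS p q) := Module.Finite.equiv (SSequiv p q).symm

lemma finrank_SS (p q : ℕ) : Module.finrank ℂ (SS p q) = (p + 1) * (q + 1) := by
  rw [(SSequiv p q).finrank_eq]; simp

/-- exponent of a pair -/
def ex (d : ℕ × ℕ) : Fin 2 →₀ ℕ := Finsupp.single 0 d.1 + Finsupp.single 1 d.2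

lemma ex_surj (d : Fin 2 →₀ ℕ) : ex (d 0, d 1) = d := by
  ext i; fin_cases i <;> simp [ex]

lemma ex_inj {d e : ℕ × ℕ} : ex d = ex e ↔ d = e := by
  constructor
  · intro h
    have h0 := DFunLike.congr_fun h 0
    have h1 := DFunLike.congr_fun h 1
    simp [ex] at h0 h1
    exact Prod.ext h0 h1
  · rintro rfl; rfl

lemma degree_ex (d : ℕ × ℕ) : (ex d).degree = d.1 + d.2 := by
  simp [ex]

/-- jets indices -/
def JJ (m : ℕ) : Finset (ℕ × ℕ) := (Finset.range m).biUnion (fun n => Finset.HasAntidiagonal.antidiagonal n)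

lemma mem_JJ {m d} : d ∈ JJ m ↔ d.1 + d.2 < m := by
  simp [JJ]

lemma card_JJ (m : ℕ) : (JJ m).card = ∑ i ∈ Finset.range m, (i + 1) := by
  rw [JJ, Finset.card_biUnion]
  · simp
  · intro i _ j _ hij
    rw [Function.onFun, Finset.disjoint_left]
    intro x hx hy
    simp at hx hy
    omega

lemma card_JJ_pred {m : ℕ} : (JJ m).card = (JJ (m - 1)).card + m := by
  cases m with
  | zero => simp [JJ]
  | succ m => simp [card_JJ, Finset.sum_range_succ]

/-- total index set -/
def KK (W : Finset (ProjLine × ProjLine)) (m : ProjLine × ProjLine → ℕ) :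
    Finset (Σ _ : ProjLine × ProjLine, ℕ × ℕ) := W.sigma (fun P => JJ (m P))

lemma card_KK_pred (W m) : (KK W m).card = (KK W (fun P => m P - 1)).card + ∑ P ∈ W, m P := by
  simp only [KK, Finset.card_sigma]
  rw [← Finset.sum_add_distrib]
  exact Finset.sum_congr rfl fun P _ => card_JJ_pred

/-- the jet map -/
def TT (W : Finset (ProjLine × ProjLine)) (m : ProjLine × ProjLine → ℕ) : R4 →ₗ[ℂ] (KK W m → ℂ) :=
  LinearMap.pi fun k => (MvPowerSeries.coeff (R := ℂ) (ex k.1.2)).comp (DP k.1.1).toLinearMap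

lemma TT_apply (W m F) (k : KK W m) : TT W m F k = MvPowerSeries.coeff (ex k.1.2) (DP k.1.1 F) := rfl

lemma TT_eq_zero {W m F} : TT W m F = 0 ↔ ∀ P ∈ W, (m P : ℕ∞) ≤ ordP P F := by
  constructor
  · intro h P hP
    apply MvPowerSeries.nat_le_order
    intro d hd
    have : (⟨P, (d 0, d 1)⟩ : Σ _ : ProjLine × ProjLine, ℕ × ℕ) ∈ KK W m := by
      rw [← ex_surj d, degree_ex] at hd
      simp [KK, mem_JJ, hP]; exact hd
    have := congrFun h ⟨_, this⟩
    rw [TT_apply] at this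
    simpa [ex_surj] using this
  · intro h
    ext ⟨⟨P, d⟩, hk⟩
    rw [TT_apply]
    simp [KK, mem_JJ] at hk
    apply MvPowerSeries.coeff_of_lt_order
    rw [degree_ex]
    refine lt_of_lt_of_le ?_ (h P hk.1)
    exact_mod_cast hk.2

/-- separating form -/
lemma exists_sep (P Q : ProjLine × ProjLine) (h : Q ≠ P) :
    ∃ L, IsBiForm L 1 1 ∧ 1 ≤ ordP Q L ∧ evP P L ≠ 0 := by
  by_cases h1 : Q.1 = P.1
  · have h2 : P.2 ≠ Q.2 := fun h2 => h (Prod.ext h1 h2.symm)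
    refine ⟨lx (cpl P.1) * ly Q.2.rep, (biform_lx _).mul' (biform_ly _), ?_, ?_⟩
    · rw [one_le_ordP]; simp [evP_lx, evP_ly, det2_self]
    · simp [evP_lx, evP_ly, det2_cpl, det2_rep_ne h2]
  · have h2 : P.1 ≠ Q.1 := fun h2 => h1 h2.symm
    refine ⟨lx Q.1.rep * ly (cpl P.2), (biform_lx _).mul' (biform_ly _), ?_, ?_⟩
    · rw [one_le_ordP]; simp [evP_lx, evP_ly, det2_self]
    · simp [evP_lx, evP_ly, det2_cpl, det2_rep_ne h2]

lemma ordP_pow (P F) (n : ℕ) : ordP P (F ^ n) = n * ordP P F := by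
  induction n with
  | zero => simp [ordP_eq_zero]
  | succ n ih => rw [pow_succ, ordP_mul, ih]; push_cast; ring

lemma exists_sepW (W : Finset (ProjLine × ProjLine)) (N : ℕ) (P : ProjLine × ProjLine) :
    ∃ M, IsBiForm M (N * W.card) (N * W.card) ∧ (∀ Q ∈ W, Q ≠ P → (N : ℕ∞) ≤ ordP Q M) ∧
      evP P M ≠ 0 := by
  classical
  induction W using Finset.induction_on with
  | empty => exact ⟨1, by
      simp only [Finset.card_empty, mul_zero]; exact isWeightedHomogeneous_one ℂ biWeight, by simp, by simp⟩
  | insert Q W hQ ih =>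
    obtain ⟨M, hM, hM1, hM2⟩ := ih
    obtain ⟨L, hL, hL1, hL2⟩ : ∃ L, IsBiForm L 1 1 ∧ (Q ≠ P → 1 ≤ ordP Q L) ∧ evP P L ≠ 0 := by
      by_cases h : Q = P
      · refine ⟨lx (cpl P.1) * ly (cpl P.2), (biform_lx _).mul' (biform_ly _), fun h' => absurd h h', ?_⟩
        simp [evP_lx, evP_ly, det2_cpl]
      · obtain ⟨L, h1, h2, h3⟩ := exists_sep P Q h
        exact ⟨L, h1, fun _ => h2, h3⟩
    refine ⟨M * L ^ N, ?_, ?_, by simp [hM2, hL2]⟩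
    · rw [Finset.card_insert_of_notMem hQ]
      have := hM.mul' (hL.pow' N)
      convert this using 1 <;> ring
    · intro R hR hRP
      rw [ordP_mul, ordP_pow]
      rcases Finset.mem_insert.1 hR with rfl | hR
      · calc (N : ℕ∞) = N * 1 := by simp
          _ ≤ N * ordP R L := by gcongr; exact hL1 hRP
          _ ≤ _ := le_add_self
      · exact (hM1 R hR hRP).trans le_self_add

/-- test form with prescribed leading term -/
lemma exists_test (W : Finset (ProjLine × ProjLine)) (N : ℕ) (P : ProjLine × ProjLine)
    (d : ℕ × ℕ) {p q : ℕ} (hp : N * W.card + d.1 ≤ p) (hq : N * W.card + d.2 ≤ q) :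
    ∃ f ∈ SS p q, (∀ Q ∈ W, Q ≠ P → (N : ℕ∞) ≤ ordP Q f) ∧
      MvPowerSeries.coeff (ex d) (DP P f) ≠ 0 ∧
      ∀ e : ℕ × ℕ, e ≠ d → e.1 + e.2 ≤ d.1 + d.2 → MvPowerSeries.coeff (ex e) (DP P f) = 0 := by
  obtain ⟨M, hM, hM1, hM2⟩ := exists_sepW W N P
  obtain ⟨r, hr⟩ := Nat.exists_eq_add_of_le hp
  obtain ⟨s, hs⟩ := Nat.exists_eq_add_of_le hq
  let f : R4 := M * ((lx P.1.rep ^ d.1 * lx (cpl P.1) ^ r) * (ly P.2.rep ^ d.2 * ly (cpl P.2) ^ s))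
  obtain ⟨c, hc, hf⟩ : ∃ c : ℂ, c ≠ 0 ∧ DP P f =
      DP P M * MvPowerSeries.monomial (ex d) c := by
    refine ⟨(det2 (cpl P.1) P.1.rep) ^ d.1 * (det2 P.1.rep (cpl P.1)) ^ r *
      ((det2 (cpl P.2) P.2.rep) ^ d.2 * (det2 P.2.rep (cpl P.2)) ^ s), ?_, ?_⟩
    · have h1 := det2_cpl P.1
      have h2 := det2_cpl P.2
      have h3 := h1
      have h4 := h2
      rw [det2_comm] at h3 h4
      rw [neg_ne_zero] at h3 h4
      positivity
    · simp only [f, map_mul, map_pow, DP_lx, DP_ly, det2_self, map_zero, zero_add, zero_mul, add_zero]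
      congr 1
      have : ∀ c : ℂ, MvPowerSeries.monomial (ex d) c =
          MvPowerSeries.C c * (MvPowerSeries.X 0 ^ d.1 * MvPowerSeries.X 1 ^ d.2) := by
        intro c
        rw [MvPowerSeries.X_pow_eq, MvPowerSeries.X_pow_eq, MvPowerSeries.monomial_mul_monomial,
          ← MvPowerSeries.monomial_zero_eq_C_apply, MvPowerSeries.monomial_mul_monomial]
        simp [ex]
      rw [this]
      simp only [map_mul, map_pow]
      ring
  refine ⟨f, ?_, ?_, ?_, ?_⟩
  · rw [mem_SS]
    have := hM.mul' ((((biform_lx P.1.rep).pow' d.1).mul' ((biform_lx (cpl P.1)).pow' r)).mul'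
       (((biform_ly P.2.rep).pow' d.2).mul' ((biform_ly (cpl P.2)).pow' s)))
    convert this using 1
    · rw [hr]; ring
    · rw [hs]; ring
  · intro Q hQ hQP
    rw [ordP_mul]
    exact (hM1 Q hQ hQP).trans le_self_add
  · rw [hf, MvPowerSeries.coeff_mul_monomial]
    simp [const_DP, hM2, hc]
  · intro e hed hle
    rw [hf, MvPowerSeries.coeff_mul_monomial, if_neg]
    intro hde
    apply hed
    have h0 := hde 0
    have h1 := hde 1
    simp [ex] at h0 h1
    ext <;> omega

lemma TT_surj (W m) {N p q : ℕ} (hN : ∀ P ∈ W, m P ≤ N) (hp : N * W.card + N ≤ p)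
    (hq : N * W.card + N ≤ q) : (SS p q).map (TT W m) = ⊤ := by
  classical
  have key : ∀ n : ℕ, ∀ k : KK W m, N - (k.1.2.1 + k.1.2.2) ≤ n →
      Pi.single k (1 : ℂ) ∈ (SS p q).map (TT W m) := by
    intro n
    induction n with
    | zero =>
      rintro ⟨⟨P, d⟩, hk⟩ h
      simp [KK, mem_JJ] at hk
      have := hN P hk.1
      simp at h
      omega
    | succ n ih =>
      rintro ⟨⟨P, d⟩, hk⟩ h
      have hk' := hk
      simp [KK, mem_JJ] at hk'
      have hmN := hN P hk'.1
      obtain ⟨f, hf, hf1, hf2, hf3⟩ := exists_test W N P d (p := p) (q := q) (by omega) (by omega)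
      have hT : TT W m f ∈ (SS p q).map (TT W m) := ⟨f, hf, rfl⟩
      have hsum : TT W m f = ∑ k, TT W m f k • Pi.single k (1 : ℂ) := by
        ext k; simp [Finset.sum_apply, Pi.single_apply]
      rw [← Finset.add_sum_erase _ _ (Finset.mem_univ (⟨⟨P, d⟩, hk⟩ : KK W m))] at hsum
      have hrest : ∑ k ∈ Finset.univ.erase (⟨⟨P, d⟩, hk⟩ : KK W m), TT W m f k • (Pi.single k (1 : ℂ) : KK W m → ℂ)
          ∈ (SS p q).map (TT W m) := by
        apply Submodule.sum_mem
        rintro ⟨⟨Q, e⟩, hq'⟩ hne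
        have hq2 := hq'
        simp [KK, mem_JJ] at hq2
        by_cases hQP : Q = P
        · subst hQP
          have hed : e ≠ d := by
            rintro rfl
            simp at hne
          by_cases hle : e.1 + e.2 ≤ d.1 + d.2
          · rw [TT_apply, hf3 e hed hle, zero_smul]; exact Submodule.zero_mem _
          · apply Submodule.smul_mem
            apply ih
            simp at h ⊢
            omega
        · rw [TT_apply, MvPowerSeries.coeff_of_lt_order, zero_smul]
          · exact Submodule.zero_mem _
          · rw [degree_ex]
            refine lt_of_lt_of_le ?_ (hf1 Q hq2.1 hQP)
            have := hN Q hq2.1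
            exact_mod_cast lt_of_lt_of_le hq2.2 this
      have h4 := Submodule.sub_mem _ hT hrest
      have h5 := eq_sub_of_add_eq hsum.symm
      rw [← h5] at h4
      exact (Submodule.smul_mem_iff _ (by rw [TT_apply]; exact hf2)).1 h4
  rw [eq_top_iff]
  intro g _
  have : g = ∑ k, g k • Pi.single k (1 : ℂ) := by
    ext k; simp [Finset.sum_apply, Pi.single_apply]
  rw [this]
  exact Submodule.sum_mem _ fun k _ => Submodule.smul_mem _ _ (key _ k le_rfl)

lemma le_ordP_mul_pred {P F G} {m : ℕ} (h1 : 1 ≤ ordP P G) (h : ((m - 1 : ℕ) : ℕ∞) ≤ ordP P F) :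
    (m : ℕ∞) ≤ ordP P (G * F) := by
  rw [ordP_mul]
  refine le_trans ?_ (add_le_add h1 h)
  norm_cast
  omega

lemma finrank_mulLeft {G : R4} (hG : G ≠ 0) (S : Submodule ℂ R4) :
    Module.finrank ℂ (S.map (LinearMap.mulLeft ℂ G)) = Module.finrank ℂ S :=
  (Submodule.equivMapOfInjective (LinearMap.mulLeft ℂ G) (fun _ _ h => mul_left_cancel₀ hG h) S).finrank_eq.symm

lemma finrank_le_map_add_ker {V V' : Type} [AddCommGroup V] [Module ℂ V] [AddCommGroup V']
    [Module ℂ V'] [FiniteDimensional ℂ V] (T : V →ₗ[ℂ] V') (U : Submodule ℂ V) :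
    Module.finrank ℂ U ≤ Module.finrank ℂ (U.map T) + Module.finrank ℂ (LinearMap.ker T) := by
  have a1 := LinearMap.finrank_range_add_finrank_ker (T.domRestrict U)
  rw [LinearMap.range_domRestrict] at a1
  have a2 : Module.finrank ℂ (LinearMap.ker (T.domRestrict U)) ≤
      Module.finrank ℂ (LinearMap.ker T) := by
    refine LinearMap.finrank_le_finrank_of_injective
      (f := (U.subtype.domRestrict (LinearMap.ker (T.domRestrict U))).codRestrict _ ?_) ?_
    · intro x; exact x.2
    · intro x y hxy
      have := congrArg Subtype.val hxy
      exact Subtype.ext (Subtype.ext this)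
  omega

set_option maxHeartbeats 1000000 in
theorem bezout {F G : R4} {d e d' e' : ℕ} (hF0 : F ≠ 0) (hG0 : G ≠ 0)
    (hF : IsBiForm F d e) (hG : IsBiForm G d' e') (hrel : IsRelPrime F G)
    (W : Finset (ProjLine × ProjLine)) (m : ProjLine × ProjLine → ℕ)
    (hFm : ∀ P ∈ W, (m P : ℕ∞) ≤ ordP P F) (hGm : ∀ P ∈ W, 1 ≤ ordP P G) :
    ∑ P ∈ W, m P ≤ d * e' + d' * e := by
  classical
  obtain ⟨N, hN⟩ : ∃ N, ∀ P ∈ W, m P ≤ N := ⟨W.sup m, fun P hP => Finset.le_sup hP⟩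
  let r := N * W.card + N
  obtain ⟨p, hp⟩ : ∃ p, p = r + d + d' := ⟨_, rfl⟩
  obtain ⟨q, hq⟩ : ∃ q, q = r + e + e' := ⟨_, rfl⟩
  have hsurj := TT_surj W m hN (p := p) (q := q) (by omega) (by omega)
  let A := (SS (r + d') (r + e')).map (LinearMap.mulLeft ℂ F)
  let B := (SS (r + d) (r + e)).map (LinearMap.mulLeft ℂ G)
  have hA : A ≤ SS p q := by
    rintro _ ⟨K, hK, rfl⟩
    have := hF.mul' hK
    rw [mem_SS]
    change IsBiForm (F * K) p q
    convert this using 1 <;> omega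
  have hB : B ≤ SS p q := by
    rintro _ ⟨K, hK, rfl⟩
    have := hG.mul' hK
    rw [mem_SS]
    change IsBiForm (G * K) p q
    convert this using 1 <;> omega
  have fA : FiniteDimensional ℂ A := by infer_instance
  have fB : FiniteDimensional ℂ B := by infer_instance
  have h1 := Submodule.finrank_sup_add_finrank_inf_eq A B
  have hAr : Module.finrank ℂ A = (r + d' + 1) * (r + e' + 1) := by
    rw [finrank_mulLeft hF0, finrank_SS]
  have hBr : Module.finrank ℂ B = (r + d + 1) * (r + e + 1) := by
    rw [finrank_mulLeft hG0, finrank_SS]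
  have hinf : Module.finrank ℂ (A ⊓ B : Submodule ℂ R4) ≤ (r + 1) * (r + 1) := by
    rw [← finrank_SS r r, ← finrank_mulLeft (mul_ne_zero hF0 hG0) (SS r r)]
    apply Submodule.finrank_mono
    rintro _ ⟨⟨K, hK, rfl⟩, ⟨L, hL, hKL⟩⟩
    simp only [LinearMap.mulLeft_apply] at hKL ⊢
    have hdvd : G ∣ F * K := ⟨L, hKL.symm⟩
    obtain ⟨M, hM⟩ := hrel.symm.dvd_of_dvd_mul_left hdvd
    by_cases hK0 : K = 0
    · simp [hK0]
    · obtain ⟨-, -, h3⟩ := quot_biform hK hK0 hG hM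
      refine ⟨M, ?_, ?_⟩
      · rw [SetLike.mem_coe, mem_SS]
        convert h3 using 1 <;> omega
      · simp [hM]
  -- upper bound of A ⊔ B
  let T := (TT W m).domRestrict (SS p q)
  have hT : LinearMap.range T = ⊤ := by
    rw [← hsurj, LinearMap.range_domRestrict]
  have hker := LinearMap.finrank_range_add_finrank_ker T
  rw [hT, finrank_top, Module.finrank_fintype_fun_eq_card, Fintype.card_coe, finrank_SS] at hker
  let U : Submodule ℂ (SS p q) := (A ⊔ B).comap (SS p q).subtype
  have hU : Module.finrank ℂ U = Module.finrank ℂ (A ⊔ B : Submodule ℂ R4) :=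
    (Submodule.comapSubtypeEquivOfLe (sup_le hA hB)).finrank_eq
  have hTU : Module.finrank ℂ (U.map T) ≤ (KK W (fun P => m P - 1)).card := by
    have hle : U.map T ≤ B.map (TT W m) := by
      rintro _ ⟨⟨x, hx⟩, hxU, rfl⟩
      obtain ⟨a, ha, b, hb, hab⟩ := Submodule.mem_sup.1 (show x ∈ A ⊔ B from hxU)
      refine ⟨b, hb, ?_⟩
      obtain ⟨K, hK, rfl⟩ := ha
      have h0 : TT W m (F * K) = 0 := by
        rw [TT_eq_zero]
        intro P hP
        rw [ordP_mul]
        exact (hFm P hP).trans le_self_add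
      change TT W m b = TT W m x
      rw [← hab, map_add, LinearMap.mulLeft_apply, h0, zero_add]
    refine (Submodule.finrank_mono hle).trans ?_
    rw [← Submodule.map_comp]
    let S' := SS (r + d) (r + e)
    let f := ((TT W m).comp (LinearMap.mulLeft ℂ G)).domRestrict S'
    let g := (TT W (fun P => m P - 1)).domRestrict S'
    have hfg : LinearMap.ker g ≤ LinearMap.ker f := by
      intro x hx
      have hx' : TT W (fun P => m P - 1) x.1 = 0 := hx
      change TT W m (G * x.1) = 0
      rw [TT_eq_zero] at hx' ⊢
      exact fun P hP => le_ordP_mul_pred (hGm P hP) (hx' P hP)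
    have hf : Module.finrank ℂ (LinearMap.range f) ≤ Module.finrank ℂ (LinearMap.range g) := by
      have a1 := LinearMap.finrank_range_add_finrank_ker f
      have a2 := LinearMap.finrank_range_add_finrank_ker g
      have a3 := Submodule.finrank_mono hfg
      omega
    rw [← LinearMap.range_domRestrict]
    refine hf.trans ((Submodule.finrank_le _).trans ?_)
    rw [Module.finrank_fintype_fun_eq_card, Fintype.card_coe]
  have hUle : Module.finrank ℂ U ≤ Module.finrank ℂ (U.map T) + Module.finrank ℂ (LinearMap.ker T) :=
    finrank_le_map_add_ker T U
  have hcard := card_KK_pred W m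
  rw [hAr, hBr] at h1
  rw [hU] at hUle
  subst hp hq
  have hfin : (r + d' + 1) * (r + e' + 1) + (r + d + 1) * (r + e + 1) + ∑ P ∈ W, m P ≤
      (r + 1) * (r + 1) + (r + d + d' + 1) * (r + e + e' + 1) := by omega
  nlinarith [hfin]

lemma irr_lin {a b : ℂ} (i j : Fin 2 ⊕ Fin 2) (hij : i ≠ j) (h : a ≠ 0 ∨ b ≠ 0) :
    Irreducible (C a * X i - C b * X j : R4) := by
  have key : ∀ (a b : ℂ) (i j : Fin 2 ⊕ Fin 2), i ≠ j → a ≠ 0 →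
      Irreducible (C a * X i + C b * X j : R4) := by
    intro a b i j hij ha
    apply irreducible_mul_X_add
    · simpa using ha
    · simp
    · intro hmem
      have := MvPolynomial.vars_mul _ _ hmem
      rw [MvPolynomial.vars_C, MvPolynomial.vars_X] at this
      simp [hij] at this
    · exact IsUnit.isRelPrime_left ((isUnit_iff_ne_zero.2 ha).map C)
  rcases h with h | h
  · have := key a (-b) i j hij h
    rwa [map_neg, neg_mul, ← sub_eq_add_neg] at this
  · have := key (-b) a j i hij.symm (neg_ne_zero.2 h)
    rwa [map_neg, neg_mul, add_comm, ← sub_eq_add_neg] at this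

lemma irr_X (i : Fin 2 ⊕ Fin 2) : Irreducible (X i : R4) := by
  obtain ⟨j, hj⟩ : ∃ j, i ≠ j := by
    rcases i with i | i
    · exact ⟨Sum.inr 0, by simp⟩
    · exact ⟨Sum.inl 0, by simp⟩
  have := irr_lin (a := 1) (b := 0) i j hj (Or.inl one_ne_zero)
  simpa using this

lemma irr_lx {v : Fin 2 → ℂ} (hv : v ≠ 0) : Irreducible (lx v) := by
  apply irr_lin
  · simp
  · by_contra! h
    apply hv
    funext i
    fin_cases i
    · exact h.2
    · exact h.1

lemma irr_ly {v : Fin 2 → ℂ} (hv : v ≠ 0) : Irreducible (ly v) := by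
  apply irr_lin
  · simp
  · by_contra! h
    apply hv
    funext i
    fin_cases i
    · exact h.2
    · exact h.1

lemma not_dvd_of_lt {L F : R4} {p q i j : ℕ} (hL : IsBiForm L i j) (hF : IsBiForm F p q)
    (h0 : F ≠ 0) (h : p < i ∨ q < j) : ¬ L ∣ F := by
  rintro ⟨K, hK⟩
  obtain ⟨h1, h2, -⟩ := quot_biform hF h0 hL hK
  omega

lemma not_dvd_X_X {π : R4} (hπ : Irreducible π) {i j : Fin 2 ⊕ Fin 2} (hij : i ≠ j)
    (h1 : π ∣ X i) (h2 : π ∣ X j) : False := by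
  have := (hπ.dvd_irreducible_iff_associated (irr_X i)).1 h1
  exact hij (X_dvd_X.1 (this.symm.dvd.trans h2))

lemma exists_relPrime {F : R4} (hF0 : F ≠ 0) (S : Submodule ℂ R4)
    (hS : ∀ π : R4, Irreducible π → ∃ G ∈ S, ¬ π ∣ G) : ∃ G ∈ S, G ≠ 0 ∧ IsRelPrime F G := by
  classical
  let F' := F * X (Sum.inl 0)
  have hF' : F' ≠ 0 := mul_ne_zero hF0 (irr_X _).ne_zero
  let ι := {π : R4 // π ∈ (UniqueFactorizationMonoid.factors F').toFinset}
  let p : ι → Submodule ℂ S := fun π =>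
    ((Ideal.span {π.1} : Ideal R4).restrictScalars ℂ).comap S.subtype
  obtain ⟨⟨G, hG⟩, hx⟩ := Submodule.exists_forall_notMem_of_forall_ne_top p (by
    rintro ⟨π, hπ⟩ htop
    have hirr := UniqueFactorizationMonoid.irreducible_of_factor π (Multiset.mem_toFinset.1 hπ)
    obtain ⟨G, hG, hnd⟩ := hS π hirr
    have : (⟨G, hG⟩ : S) ∈ p ⟨π, hπ⟩ := by rw [htop]; trivial
    exact hnd (Ideal.mem_span_singleton.1 this))
  have key : ∀ π, Irreducible π → π ∣ F' → ¬ π ∣ G := by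
    intro π hπ hd hdG
    obtain ⟨π', hπ', ha⟩ := UniqueFactorizationMonoid.exists_mem_factors_of_dvd hF' hπ hd
    apply hx ⟨π', Multiset.mem_toFinset.2 hπ'⟩
    exact Ideal.mem_span_singleton.2 (ha.symm.dvd.trans hdG)
  refine ⟨G, hG, ?_, ?_⟩
  · rintro rfl
    exact key _ (irr_X (Sum.inl 0)) (dvd_mul_left _ _) (dvd_zero _)
  · apply WfDvdMonoid.isRelPrime_of_no_irreducible_factors (fun h => hF0 h.1)
    intro z hz hzF
    exact key z hz (hzF.trans (dvd_mul_right _ _))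

/-- Evaluations on a finite set as a linear map. -/
def evW (W : Finset (ProjLine × ProjLine)) : R4 →ₗ[ℂ] (W → ℂ) :=
  LinearMap.pi fun P => (evP P.1).toLinearMap

theorem partI (Z : Finset (ProjLine × ProjLine)) (n : ℕ) (hn : 2 ≤ n)
    (hno : ∀ G, IsBiForm G n n → (∀ P ∈ Z, evP P G = 0) → G = 0)
    {F : R4} (hF0 : F ≠ 0) (hF : IsBiForm F (n + 6) (n + 6))
    (hFZ : ∀ P ∈ Z, (6 : ℕ∞) ≤ ordP P F) : False := by
  classical
  let good : Finset (ProjLine × ProjLine) → Prop := fun W =>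
    W ⊆ Z ∧ ∀ G, IsBiForm G n n → (∀ P ∈ W, evP P G = 0) → G = 0
  obtain ⟨W, ⟨hWZ, hW⟩, hmin⟩ : ∃ W, good W ∧ ∀ W', good W' → W' ⊆ W → W' = W := by
    obtain ⟨W, hW⟩ := exists_minimal_of_wellFoundedLT good ⟨Z, subset_rfl, hno⟩
    exact ⟨W, hW.1, fun W' h' hs => le_antisymm hs (hW.2 h' hs)⟩
  have hL : ∀ P ∈ W, ∃ L, IsBiForm L n n ∧ (∀ Q ∈ W, Q ≠ P → evP Q L = 0) ∧ evP P L ≠ 0 := by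
    intro P hP
    by_contra! hc
    have := hmin (W.erase P) ⟨(W.erase_subset P).trans hWZ, fun G hG hv => ?_⟩ (W.erase_subset P)
    · have hP' := hP
      rw [← this] at hP'
      exact Finset.notMem_erase P W hP'
    · have h1 := hc G hG (fun Q hQ hne => hv Q (Finset.mem_erase.2 ⟨hne, hQ⟩))
      apply hW G hG
      intro Q hQ
      by_cases hq : Q = P
      · rw [hq, h1]
      · exact hv Q (Finset.mem_erase.2 ⟨hq, hQ⟩)
  choose! L hL1 hL2 hL3 using hL
  have hcard : (n + 1) * (n + 1) ≤ W.card := by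
    have := LinearMap.finrank_le_finrank_of_injective (f := (evW W).domRestrict (SS n n)) (by
      rw [← LinearMap.ker_eq_bot, LinearMap.ker_eq_bot']
      rintro ⟨G, hG⟩ h
      apply Subtype.ext
      apply hW G hG
      intro P hP
      exact congrFun h ⟨P, hP⟩)
    rwa [finrank_SS, Module.finrank_fintype_fun_eq_card, Fintype.card_coe] at this
  have hspan : ∀ A, IsBiForm A n n → A = ∑ P ∈ W, C (evP P A / evP P (L P)) * L P := by
    intro A hA
    rw [← sub_eq_zero]
    apply hW
    · apply IsWeightedHomogeneous.sub hA
      apply IsWeightedHomogeneous.sum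
      intro P hP
      exact (hL1 P hP).C_mul _
    · intro Q hQ
      rw [map_sub, map_sum, Finset.sum_eq_single Q]
      · have : evP Q (C (evP Q A / evP Q (L Q))) = evP Q A / evP Q (L Q) := (evP Q).commutes _
        rw [map_mul, this, div_mul_cancel₀ _ (hL3 Q hQ), sub_self]
      · intro P hP hne
        rw [map_mul, hL2 P hP Q hQ hne.symm, mul_zero]
      · intro h; exact absurd hQ h
  let S : Submodule ℂ R4 := SS (n + 1) (n + 1) ⊓ LinearMap.ker (evW W)
  have hSmem : ∀ G, IsBiForm G (n + 1) (n + 1) → (∀ P ∈ W, evP P G = 0) → G ∈ S := by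
    intro G hG hv
    refine ⟨hG, ?_⟩
    rw [SetLike.mem_coe, LinearMap.mem_ker]
    funext P
    exact hv P.1 P.2
  obtain ⟨G, hGS, hG0, hrel⟩ := exists_relPrime hF0 S (by
    intro π hπ
    by_contra! hall
    have hπp := hπ.prime
    have hdL : ∀ P ∈ W, π ∣ L P := by
      intro P hP
      by_contra hnd
      have h1 : ∀ i, π ∣ lx P.1.rep * X (Sum.inr i) := by
        intro i
        have := hall (L P * (lx P.1.rep * X (Sum.inr i))) (hSmem _ ?_ ?_)
        · exact (hπp.dvd_or_dvd this).resolve_left hnd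
        · have := (hL1 P hP).mul' ((biform_lx P.1.rep).mul' (biform_inr i))
          simpa using this
        · intro Q hQ
          by_cases hq : Q = P
          · rw [hq, map_mul, map_mul, evP_lx, det2_self]; simp
          · rw [map_mul, hL2 P hP Q hQ hq, zero_mul]
      have h2 : ∀ i, π ∣ ly P.2.rep * X (Sum.inl i) := by
        intro i
        have := hall (L P * (ly P.2.rep * X (Sum.inl i))) (hSmem _ ?_ ?_)
        · exact (hπp.dvd_or_dvd this).resolve_left hnd
        · have := (hL1 P hP).mul' ((biform_ly P.2.rep).mul' (biform_inl i))
          simpa using this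
        · intro Q hQ
          by_cases hq : Q = P
          · rw [hq, map_mul, map_mul, evP_ly, det2_self]; simp
          · rw [map_mul, hL2 P hP Q hQ hq, zero_mul]
      have h3 : π ∣ lx P.1.rep := by
        by_contra hc
        exact not_dvd_X_X hπ (i := Sum.inr 0) (j := Sum.inr 1) (by simp)
          ((hπp.dvd_or_dvd (h1 0)).resolve_left hc) ((hπp.dvd_or_dvd (h1 1)).resolve_left hc)
      have h4 : π ∣ ly P.2.rep := by
        by_contra hc
        exact not_dvd_X_X hπ (i := Sum.inl 0) (j := Sum.inl 1) (by simp)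
          ((hπp.dvd_or_dvd (h2 0)).resolve_left hc) ((hπp.dvd_or_dvd (h2 1)).resolve_left hc)
      have ha := (hπ.dvd_irreducible_iff_associated (irr_lx P.1.rep_nonzero)).1 h3
      exact not_dvd_of_lt (biform_lx _) (biform_ly _) (irr_ly P.2.rep_nonzero).ne_zero
        (Or.inl one_pos) (ha.symm.dvd.trans h4)
    have hdA : ∀ A, IsBiForm A n n → π ∣ A := by
      intro A hA
      rw [hspan A hA]
      exact Finset.dvd_sum fun P hP => (hdL P hP).mul_left _
    have hb : ∀ i, IsBiForm ((X (Sum.inl i) : R4) ^ n * X (Sum.inr i) ^ n) n n := by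
      intro i
      simpa using ((biform_inl i).pow' n).mul' ((biform_inr i).pow' n)
    have h0 := (hπp.dvd_or_dvd (hdA _ (hb 0))).imp hπp.dvd_of_dvd_pow hπp.dvd_of_dvd_pow
    have h1 := (hπp.dvd_or_dvd (hdA _ (hb 1))).imp hπp.dvd_of_dvd_pow hπp.dvd_of_dvd_pow
    rcases h0 with h0 | h0 <;> rcases h1 with h1 | h1 <;>
      exact not_dvd_X_X hπ (by simp) h0 h1)
  have hbz := bezout hF0 hG0 hF hGS.1 hrel W (fun _ => 6) (fun P hP => hFZ P (hWZ hP)) (by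
    intro P hP
    rw [one_le_ordP]
    exact congrFun (LinearMap.mem_ker.1 hGS.2) ⟨P, hP⟩)
  simp only [Finset.sum_const, smul_eq_mul] at hbz
  nlinarith

/-- Existence of a nonzero form of bidegree `(p,q)` with prescribed orders at four points. -/
def EE (pt : Fin 4 → ProjLine × ProjLine) (p q : ℕ) (m : Fin 4 → ℕ) : Prop :=
  Function.Injective pt ∧
    ∃ F : R4, F ≠ 0 ∧ IsBiForm F p q ∧ ∀ k, (m k : ℕ∞) ≤ ordP (pt k) F

lemma ordP_le_one {L G : R4} {i j i' j' : ℕ} {P : ProjLine × ProjLine} (hL : Irreducible L)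
    (hLb : IsBiForm L i j) (hG : G ≠ 0) (hGb : IsBiForm G i' j') (hnd : ¬ L ∣ G)
    (h1 : i * j' + i' * j = 1) (hP : evP P G = 0) : ordP P L ≤ 1 := by
  by_contra! hc
  have h2 : (2 : ℕ∞) ≤ ordP P L := by
    have := Order.add_one_le_of_lt hc
    rwa [one_add_one_eq_two] at this
  have := bezout hL.ne_zero hG hLb hGb (hL.isRelPrime_iff_not_dvd.2 hnd) {P} (fun _ => 2)
    (by simpa using h2) (by simpa [one_le_ordP] using hP)
  simp [h1] at this

lemma EE_step {pt : Fin 4 → ProjLine × ProjLine} {p q : ℕ} {m : Fin 4 → ℕ} {L : R4} {i j : ℕ}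
    (hL : Irreducible L) (hLb : IsBiForm L i j) (hord : ∀ P, ordP P L ≤ 1) (z u : Fin 4 → Bool)
    (hz : ∀ k, z k = true → evP (pt k) L = 0) (hu : ∀ k, u k = false → evP (pt k) L ≠ 0)
    (hE : EE pt p q m) (hs : p * j + i * q < ∑ k, if z k then m k else 0) :
    i ≤ p ∧ j ≤ q ∧ EE pt (p - i) (q - j) (fun k => if u k then m k - 1 else m k) := by
  obtain ⟨hinj, F, hF0, hF, hm⟩ := hE
  have hdvd : L ∣ F := by
    by_contra hnd
    have := bezout hF0 hL.ne_zero hF hLb (hL.isRelPrime_iff_not_dvd.2 hnd).symm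
      ((Finset.univ.filter fun k => z k = true).map ⟨pt, hinj⟩) (Function.extend pt m 0)
      (by
        intro P hP
        simp only [Finset.mem_map, Finset.mem_filter, Function.Embedding.coeFn_mk] at hP
        obtain ⟨k, -, rfl⟩ := hP
        rw [hinj.extend_apply]
        exact hm k)
      (by
        intro P hP
        simp only [Finset.mem_map, Finset.mem_filter, Function.Embedding.coeFn_mk] at hP
        obtain ⟨k, hk, rfl⟩ := hP
        rw [one_le_ordP]
        exact hz k hk.2)
    rw [Finset.sum_map, Finset.sum_filter] at this
    simp only [Function.Embedding.coeFn_mk, hinj.extend_apply] at this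
    omega
  obtain ⟨K, hK⟩ := hdvd
  obtain ⟨h1, h2, h3⟩ := quot_biform hF hF0 hLb hK
  refine ⟨h1, h2, hinj, K, ?_, h3, ?_⟩
  · rintro rfl
    exact hF0 (by rw [hK, mul_zero])
  · intro k
    have hk := hm k
    rw [hK, ordP_mul] at hk
    beta_reduce
    by_cases huk : u k = true
    · rw [if_pos huk]
      have h4 : (m k : ℕ∞) ≤ 1 + ordP (pt k) K := hk.trans (add_le_add_left (hord _) _)
      generalize ordP (pt k) K = o at h4 ⊢
      induction o using ENat.recTopCoe with
      | top => exact le_top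
      | coe o =>
        norm_cast at h4 ⊢
        omega
    · rw [if_neg huk]
      rw [ordP_eq_zero.2 (hu k (by simpa using huk)), zero_add] at hk
      exact hk

lemma EE_iter {pt : Fin 4 → ProjLine × ProjLine} {p q : ℕ} {m : Fin 4 → ℕ} {L : R4} {i j : ℕ}
    (hL : Irreducible L) (hLb : IsBiForm L i j) (hord : ∀ P, ordP P L ≤ 1) (z u : Fin 4 → Bool)
    (hz : ∀ k, z k = true → evP (pt k) L = 0) (hu : ∀ k, u k = false → evP (pt k) L ≠ 0)
    (hE : EE pt p q m) (n : ℕ) (hs : ∀ t < n, (p - t * i) * j + i * (q - t * j) <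
      ∑ k, if z k then m k - t else 0) :
    n * i ≤ p ∧ n * j ≤ q ∧
      EE pt (p - n * i) (q - n * j) (fun k => if u k then m k - n else m k) := by
  induction n with
  | zero => simpa using hE
  | succ n ih =>
    obtain ⟨h1, h2, h3⟩ := ih (fun t ht => hs t (by omega))
    have hzu : ∀ k, z k = true → u k = true := by
      intro k hk
      by_contra hc
      exact hu k (by simpa using hc) (hz k hk)
    obtain ⟨h4, h5, h6⟩ := EE_step hL hLb hord z u hz hu h3 (by
      refine (hs n (by omega)).trans_le (le_of_eq (Finset.sum_congr rfl fun k _ => ?_))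
      by_cases hk : z k = true
      · simp [hk, hzu k hk]
      · simp [hk])
    refine ⟨by rw [Nat.succ_mul]; omega, by rw [Nat.succ_mul]; omega, ?_⟩
    rw [Nat.succ_mul, Nat.succ_mul, ← Nat.sub_sub, ← Nat.sub_sub]
    convert h6 using 2 with k
    by_cases hk : u k = true
    · simp [hk, Nat.sub_sub]
    · simp [hk]

lemma ordP_lx (v : ProjLine) (P) : ordP P (lx v.rep) ≤ 1 :=
  ordP_le_one (irr_lx v.rep_nonzero) (biform_lx _) (irr_ly P.2.rep_nonzero).ne_zero (biform_ly _)
    (not_dvd_of_lt (biform_lx _) (biform_ly _) (irr_ly P.2.rep_nonzero).ne_zero (Or.inl one_pos))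
    (by norm_num) (by rw [evP_ly, det2_self])

lemma ordP_ly (v : ProjLine) (P) : ordP P (ly v.rep) ≤ 1 :=
  ordP_le_one (irr_ly v.rep_nonzero) (biform_ly _) (irr_lx P.1.rep_nonzero).ne_zero (biform_lx _)
    (not_dvd_of_lt (biform_ly _) (biform_lx _) (irr_lx P.1.rep_nonzero).ne_zero (Or.inr one_pos))
    (by norm_num) (by rw [evP_lx, det2_self])

/-- a bilinear form -/
def conic (a b : Fin 2 → ℂ) : R4 := ly a * X (Sum.inl 0) + ly b * X (Sum.inl 1)

lemma biform_conic (a b) : IsBiForm (conic a b) 1 1 := by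
  have h1 := (biform_ly a).mul' (biform_inl 0)
  have h2 := (biform_ly b).mul' (biform_inl 1)
  simp only [zero_add, add_zero] at h1 h2
  exact IsWeightedHomogeneous.add h1 h2

lemma vars_ly (a) : ∀ i ∈ (ly a).vars, ∃ j, i = Sum.inr j := by
  intro i hi
  unfold ly at hi
  have := MvPolynomial.vars_sub_subset (p := (C (a 1) * X (Sum.inr 0) : R4)) (q := C (a 0) * X (Sum.inr 1)) hi
  rw [Finset.mem_union] at this
  rcases this with h | h <;>
  · have := MvPolynomial.vars_mul _ _ h
    rw [MvPolynomial.vars_C, MvPolynomial.vars_X] at this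
    simp at this
    exact ⟨_, this⟩

lemma irr_conic {a b} (h : det2 a b ≠ 0) : Irreducible (conic a b) := by
  have ha : a ≠ 0 := by rintro rfl; simp [det2] at h
  have hb : b ≠ 0 := by rintro rfl; simp [det2] at h
  apply irreducible_mul_X_add
  · exact (irr_ly ha).ne_zero
  · intro hi
    obtain ⟨j, hj⟩ := vars_ly a _ hi
    cases hj
  · intro hi
    have := MvPolynomial.vars_mul _ _ hi
    rw [Finset.mem_union] at this
    rcases this with h' | h'
    · obtain ⟨j, hj⟩ := vars_ly b _ h'
      cases hj
    · rw [MvPolynomial.vars_X] at h'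
      simp at h'
  · rw [(irr_ly ha).isRelPrime_iff_not_dvd]
    intro hd
    rcases (irr_ly ha).prime.dvd_or_dvd hd with hd | hd
    · obtain ⟨K, hK⟩ := hd
      have := congrArg (aeval (Sum.elim a a) : R4 →ₐ[ℂ] ℂ) hK
      rw [map_mul] at this
      simp [ly] at this
      apply h
      unfold det2
      linear_combination (norm := ring_nf) this
    · exact not_dvd_of_lt (biform_ly _) (biform_inl _) (irr_X _).ne_zero (Or.inr one_pos) hd

lemma exists_conic {P Q R : ProjLine × ProjLine} (h12 : P.1 ≠ Q.1) (h13 : P.1 ≠ R.1)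
    (h23 : Q.1 ≠ R.1) (k12 : P.2 ≠ Q.2) (k13 : P.2 ≠ R.2) (k23 : Q.2 ≠ R.2) :
    ∃ L, Irreducible L ∧ IsBiForm L 1 1 ∧ (∀ S, ordP S L ≤ 1) ∧ evP P L = 0 ∧ evP Q L = 0 ∧
      evP R L = 0 := by
  set x1 := P.1.rep with hx1
  set x2 := Q.1.rep with hx2
  set x3 := R.1.rep with hx3
  set y1 := P.2.rep with hy1
  set y2 := Q.2.rep with hy2
  set y3 := R.2.rep with hy3
  set α := det2 x3 x2 * det2 y3 y1 with hα
  set β := det2 x3 x1 * det2 y3 y2 with hβ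
  let a : Fin 2 → ℂ := fun i => α * x1 1 * y2 i - β * x2 1 * y1 i
  let b : Fin 2 → ℂ := fun i => - α * x1 0 * y2 i + β * x2 0 * y1 i
  have hab : det2 a b = α * β * det2 x1 x2 * det2 y1 y2 := by
    simp only [det2, a, b]; ring
  have hne : det2 a b ≠ 0 := by
    rw [hab]
    refine mul_ne_zero (mul_ne_zero (mul_ne_zero (mul_ne_zero ?_ ?_) (mul_ne_zero ?_ ?_)) ?_) ?_ <;>
      apply det2_rep_ne
    exacts [h23.symm, k13.symm, h13.symm, k23.symm, h12, k12]
  have heq : conic a b = C α * (lx x1 * ly y2) - C β * (lx x2 * ly y1) := by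
    simp only [conic, lx, ly, a, b, map_sub, map_add, map_mul, map_neg]; ring
  have hev : ∀ S, evP S (conic a b) =
      α * (det2 S.1.rep x1 * det2 S.2.rep y2) - β * (det2 S.1.rep x2 * det2 S.2.rep y1) := by
    intro S
    have hC : ∀ c, evP S (C c) = c := fun c => (evP S).commutes c
    rw [heq]
    simp only [map_sub, map_mul, evP_lx, evP_ly, hC]
  refine ⟨conic a b, irr_conic hne, biform_conic _ _, ?_, ?_, ?_, ?_⟩
  · intro S
    exact ordP_le_one (irr_conic hne) (biform_conic _ _) (irr_lx S.1.rep_nonzero).ne_zero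
      (biform_lx _) (not_dvd_of_lt (biform_conic _ _) (biform_lx _)
        (irr_lx S.1.rep_nonzero).ne_zero (Or.inr one_pos))
      (by norm_num) (by rw [evP_lx, det2_self])
  · rw [hev, ← hx1, ← hy1, det2_self, det2_self]; ring
  · rw [hev, ← hx2, ← hy2, det2_self, det2_self]; ring
  · rw [hev, ← hx3, ← hy3, hα, hβ]; ring

lemma EE_V {pt : Fin 4 → ProjLine × ProjLine} {p q : ℕ} {m : Fin 4 → ℕ} (v : ProjLine)
    (z : Fin 4 → Bool) (hz : ∀ k, z k = true ↔ (pt k).1 = v) (hE : EE pt p q m) (n : ℕ)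
    (hs : ∀ t < n, q < ∑ k, if z k then m k - t else 0) :
    n ≤ p ∧ EE pt (p - n) q (fun k => if z k then m k - n else m k) := by
  have := EE_iter (irr_lx v.rep_nonzero) (biform_lx _) (ordP_lx v) z z
    (fun k hk => by rw [evP_lx, (hz k).1 hk, det2_self])
    (fun k hk => by
      rw [evP_lx]
      apply det2_rep_ne
      intro h
      rw [← hz, hk] at h
      cases h)
    hE n (by simpa using hs)
  simpa using this

lemma EE_H {pt : Fin 4 → ProjLine × ProjLine} {p q : ℕ} {m : Fin 4 → ℕ} (v : ProjLine)
    (z : Fin 4 → Bool) (hz : ∀ k, z k = true ↔ (pt k).2 = v) (hE : EE pt p q m) (n : ℕ)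
    (hs : ∀ t < n, p < ∑ k, if z k then m k - t else 0) :
    n ≤ q ∧ EE pt p (q - n) (fun k => if z k then m k - n else m k) := by
  have := EE_iter (irr_ly v.rep_nonzero) (biform_ly _) (ordP_ly v) z z
    (fun k hk => by rw [evP_ly, (hz k).1 hk, det2_self])
    (fun k hk => by
      rw [evP_ly]
      apply det2_rep_ne
      intro h
      rw [← hz, hk] at h
      cases h)
    hE n (by simpa using hs)
  simpa using this

/-- pairwise distinct coordinates -/
def Gen (P Q : ProjLine × ProjLine) : Prop := P.1 ≠ Q.1 ∧ P.2 ≠ Q.2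

lemma EE_C {pt : Fin 4 → ProjLine × ProjLine} {p q : ℕ} {m : Fin 4 → ℕ} (a b c : Fin 4)
    (z : Fin 4 → Bool) (hzz : ∀ k, z k = true → k = a ∨ k = b ∨ k = c)
    (hab : Gen (pt a) (pt b)) (hac : Gen (pt a) (pt c)) (hbc : Gen (pt b) (pt c))
    (hE : EE pt p q m) (n : ℕ)
    (hs : ∀ t < n, (p - t) + (q - t) < ∑ k, if z k then m k - t else 0) :
    n ≤ p ∧ n ≤ q ∧ EE pt (p - n) (q - n) (fun k => m k - n) := by
  obtain ⟨L, h1, h2, h3, h4, h5, h6⟩ := exists_conic hab.1 hac.1 hbc.1 hab.2 hac.2 hbc.2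
  have := EE_iter h1 h2 h3 z (fun _ => true)
    (fun k hk => by rcases hzz k hk with rfl | rfl | rfl <;> assumption)
    (fun k hk => by cases hk) hE n (by simpa using hs)
  simpa using this

/-- The reduction rules for a predicate on four points, bidegree, and multiplicities. -/
structure Rules (E : (Fin 4 → ProjLine × ProjLine) → ℕ → ℕ → (Fin 4 → ℕ) → Prop) : Prop where
  V : ∀ {pt : Fin 4 → ProjLine × ProjLine} {p q : ℕ} {m : Fin 4 → ℕ} (v : ProjLine)
    (z : Fin 4 → Bool), (∀ k, z k = true ↔ (pt k).1 = v) → E pt p q m → ∀ n : ℕ,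
    (∀ t < n, q < ∑ k, if z k then m k - t else 0) →
    n ≤ p ∧ E pt (p - n) q (fun k => if z k then m k - n else m k)
  H : ∀ {pt : Fin 4 → ProjLine × ProjLine} {p q : ℕ} {m : Fin 4 → ℕ} (v : ProjLine)
    (z : Fin 4 → Bool), (∀ k, z k = true ↔ (pt k).2 = v) → E pt p q m → ∀ n : ℕ,
    (∀ t < n, p < ∑ k, if z k then m k - t else 0) →
    n ≤ q ∧ E pt p (q - n) (fun k => if z k then m k - n else m k)
  C : ∀ {pt : Fin 4 → ProjLine × ProjLine} {p q : ℕ} {m : Fin 4 → ℕ} (a b c : Fin 4)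
    (z : Fin 4 → Bool), (∀ k, z k = true → k = a ∨ k = b ∨ k = c) →
    Gen (pt a) (pt b) → Gen (pt a) (pt c) → Gen (pt b) (pt c) → E pt p q m → ∀ n : ℕ,
    (∀ t < n, (p - t) + (q - t) < ∑ k, if z k then m k - t else 0) →
    n ≤ p ∧ n ≤ q ∧ E pt (p - n) (q - n) (fun k => m k - n)

lemma rules_EE : Rules EE := ⟨EE_V, EE_H, EE_C⟩

lemma rules_swap : Rules (fun pt p q m => EE (fun k => (pt k).swap) q p m) := by
  refine ⟨fun v z hz hE n hs => EE_H v z hz hE n hs, fun v z hz hE n hs => EE_V v z hz hE n hs, ?_⟩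
  intro pt p q m a b c z hz hab hac hbc hE n hs
  obtain ⟨h1, h2, h3⟩ := EE_C (pt := fun k => (pt k).swap) a b c z hz ⟨hab.2, hab.1⟩ ⟨hac.2, hac.1⟩ ⟨hbc.2, hbc.1⟩ hE n
    (fun t ht => by rw [add_comm]; exact hs t ht)
  exact ⟨h2, h1, h3⟩

lemma forall_fin4 {p : Fin 4 → Prop} : (∀ k, p k) ↔ p 0 ∧ p 1 ∧ p 2 ∧ p 3 := by
  simp [Fin.forall_fin_succ]

lemma inj4 {P1 P2 P3 P4 : ProjLine × ProjLine} (h12 : P1 ≠ P2) (h13 : P1 ≠ P3) (h14 : P1 ≠ P4)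
    (h23 : P2 ≠ P3) (h24 : P2 ≠ P4) (h34 : P3 ≠ P4) :
    Function.Injective ![P1, P2, P3, P4] := by
  intro i j
  fin_cases i <;> fin_cases j <;> simp [h12, h13, h14, h23, h24, h34, h12.symm, h13.symm,
    h14.symm, h23.symm, h24.symm, h34.symm]

/-- Two vertical pairs with all heights distinct. -/
lemma cfg_2P3 {E : (Fin 4 → ProjLine × ProjLine) → ℕ → ℕ → (Fin 4 → ℕ) → Prop}
    (R : Rules E) {P1 P2 P3 P4 : ProjLine × ProjLine}
    (hE : E ![P1, P2, P3, P4] 7 7 (fun _ => 6))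
    (x2 : P2.1 = P1.1) (x4 : P4.1 = P3.1) (x13 : P3.1 ≠ P1.1)
    (y12 : P1.2 ≠ P2.2) (y13 : P1.2 ≠ P3.2) (y14 : P1.2 ≠ P4.2) (y23 : P2.2 ≠ P3.2)
    (y24 : P2.2 ≠ P4.2) (y34 : P3.2 ≠ P4.2) : False := by
  obtain ⟨-, h⟩ := R.V P1.1 ![true, true, false, false]
    (by simp [forall_fin4, x2, x4, x13]) hE 3 (by decide)
  obtain ⟨-, h⟩ := R.V P3.1 ![false, false, true, true]
    (by simp [forall_fin4, x2, x4, x13.symm]) h 3 (by decide)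
  obtain ⟨-, h⟩ := R.H P1.2 ![true, false, false, false]
    (by simp [forall_fin4, y12.symm, y13.symm, y14.symm]) h 2 (by decide)
  obtain ⟨-, h⟩ := R.H P2.2 ![false, true, false, false]
    (by simp [forall_fin4, y12, y23.symm, y24.symm]) h 2 (by decide)
  obtain ⟨-, h⟩ := R.H P3.2 ![false, false, true, false]
    (by simp [forall_fin4, y13, y23, y34.symm]) h 2 (by decide)
  obtain ⟨h, -⟩ := R.H P4.2 ![false, false, false, true]
    (by simp [forall_fin4, y14, y24, y34]) h 2 (by decide)
  revert h; decide

/-- Two vertical pairs with one coincidence of heights. -/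
lemma cfg_P5v {E : (Fin 4 → ProjLine × ProjLine) → ℕ → ℕ → (Fin 4 → ℕ) → Prop}
    (R : Rules E) {P1 P2 P3 P4 : ProjLine × ProjLine}
    (hE : E ![P1, P2, P3, P4] 7 7 (fun _ => 6))
    (x2 : P2.1 = P1.1) (x4 : P4.1 = P3.1) (x13 : P3.1 ≠ P1.1)
    (y3 : P3.2 = P1.2) (y12 : P1.2 ≠ P2.2) (y14 : P1.2 ≠ P4.2)
    (y24 : P2.2 ≠ P4.2) : False := by
  obtain ⟨-, h⟩ := R.V P1.1 ![true, true, false, false]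
    (by simp [forall_fin4, x2, x4, x13]) hE 3 (by decide)
  obtain ⟨-, h⟩ := R.V P3.1 ![false, false, true, true]
    (by simp [forall_fin4, x2, x4, x13.symm]) h 3 (by decide)
  obtain ⟨-, h⟩ := R.H P1.2 ![true, false, true, false]
    (by simp [forall_fin4, y12.symm, y3, y14.symm]) h 3 (by decide)
  obtain ⟨-, h⟩ := R.H P2.2 ![false, true, false, false]
    (by simp [forall_fin4, y12, y3, y24.symm]) h 2 (by decide)
  obtain ⟨-, h⟩ := R.H P4.2 ![false, false, false, true]
    (by simp [forall_fin4, y14, y24, y3]) h 2 (by decide)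
  obtain ⟨-, h⟩ := R.V P1.1 ![true, true, false, false]
    (by simp [forall_fin4, x2, x4, x13]) h 1 (by decide)
  obtain ⟨h, -⟩ := R.V P3.1 ![false, false, true, true]
    (by simp [forall_fin4, x2, x4, x13.symm]) h 1 (by decide)
  revert h; decide

/-- A vertical pair, and two points at the same heights on different verticals. -/
lemma cfg_P5h {E : (Fin 4 → ProjLine × ProjLine) → ℕ → ℕ → (Fin 4 → ℕ) → Prop}
    (R : Rules E) {P1 P2 P3 P4 : ProjLine × ProjLine}
    (hE : E ![P1, P2, P3, P4] 7 7 (fun _ => 6))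
    (x2 : P2.1 = P1.1) (x13 : P3.1 ≠ P1.1) (x14 : P4.1 ≠ P1.1) (x34 : P3.1 ≠ P4.1)
    (y3 : P3.2 = P1.2) (y4 : P4.2 = P2.2) (y12 : P1.2 ≠ P2.2) : False := by
  obtain ⟨-, h⟩ := R.V P1.1 ![true, true, false, false]
    (by simp [forall_fin4, x2, x14, x13]) hE 3 (by decide)
  obtain ⟨-, h⟩ := R.H P1.2 ![true, false, true, false]
    (by simp [forall_fin4, y12.symm, y3, y4]) h 3 (by decide)
  obtain ⟨-, h⟩ := R.H P2.2 ![false, true, false, true]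
    (by simp [forall_fin4, y12, y3, y4]) h 3 (by decide)
  obtain ⟨-, h⟩ := R.V P3.1 ![false, false, true, false]
    (by simp [forall_fin4, x2, x13.symm, x34.symm]) h 2 (by decide)
  obtain ⟨-, h⟩ := R.V P4.1 ![false, false, false, true]
    (by simp [forall_fin4, x2, x14.symm, x34]) h 2 (by decide)
  obtain ⟨-, h⟩ := R.H P1.2 ![true, false, true, false]
    (by simp [forall_fin4, y12.symm, y3, y4]) h 1 (by decide)
  obtain ⟨h, -⟩ := R.H P2.2 ![false, true, false, true]
    (by simp [forall_fin4, y12, y3, y4]) h 1 (by decide)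
  revert h; decide

/-- A vertical pair, and two general points. -/
lemma cfg_P32 {E : (Fin 4 → ProjLine × ProjLine) → ℕ → ℕ → (Fin 4 → ℕ) → Prop}
    (R : Rules E) {P1 P2 P3 P4 : ProjLine × ProjLine}
    (hE : E ![P1, P2, P3, P4] 7 7 (fun _ => 6))
    (x2 : P2.1 = P1.1) (x13 : P3.1 ≠ P1.1) (x14 : P4.1 ≠ P1.1) (x34 : P3.1 ≠ P4.1)
    (y13 : P1.2 ≠ P3.2) (y14 : P1.2 ≠ P4.2) (y23 : P2.2 ≠ P3.2)
    (y24 : P2.2 ≠ P4.2) (y34 : P3.2 ≠ P4.2) : False := by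
  obtain ⟨-, h⟩ := R.V P1.1 ![true, true, false, false]
    (by simp [forall_fin4, x2, x14, x13]) hE 3 (by decide)
  obtain ⟨-, -, h⟩ := R.C 0 2 3 ![true, false, true, true]
    (by decide) ⟨x13.symm, y13⟩ ⟨x14.symm, y14⟩ ⟨x34, y34⟩ h 4 (by decide)
  obtain ⟨h, -, -⟩ := R.C 1 2 3 ![false, true, true, true]
    (by decide) ⟨by simpa [x2] using x13.symm, y23⟩ ⟨by simpa [x2] using x14.symm, y24⟩
    ⟨x34, y34⟩ h 1 (by decide)
  revert h; decide

/-- A vertical pair, a point at the same height as the first, and a general point. -/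
lemma cfg_P41 {E : (Fin 4 → ProjLine × ProjLine) → ℕ → ℕ → (Fin 4 → ℕ) → Prop}
    (R : Rules E) {P1 P2 P3 P4 : ProjLine × ProjLine}
    (hE : E ![P1, P2, P3, P4] 7 7 (fun _ => 6))
    (x2 : P2.1 = P1.1) (x13 : P3.1 ≠ P1.1) (x14 : P4.1 ≠ P1.1) (x34 : P3.1 ≠ P4.1)
    (y3 : P3.2 = P1.2) (y12 : P1.2 ≠ P2.2) (y14 : P1.2 ≠ P4.2)
    (y24 : P2.2 ≠ P4.2) : False := by
  obtain ⟨-, h⟩ := R.V P1.1 ![true, true, false, false]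
    (by simp [forall_fin4, x2, x14, x13]) hE 3 (by decide)
  obtain ⟨-, h⟩ := R.H P1.2 ![true, false, true, false]
    (by simp [forall_fin4, y12.symm, y3, y14.symm]) h 3 (by decide)
  obtain ⟨-, -, h⟩ := R.C 1 2 3 ![false, true, true, true]
    (by decide) ⟨by simpa [x2] using x13.symm, by simpa [y3] using y12.symm⟩
    ⟨by simpa [x2] using x14.symm, y24⟩
    ⟨x34, by simpa [y3] using y14⟩ h 4 (by decide)
  obtain ⟨h, -⟩ := R.V P4.1 ![false, false, false, true]
    (by simp [forall_fin4, x2, x14.symm, x34]) h 1 (by decide)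
  revert h; decide

set_option maxHeartbeats 4000000 in
/-- The analysis when some vertical line contains two points of `Z`. -/
theorem case2 {E : (Fin 4 → ProjLine × ProjLine) → ℕ → ℕ → (Fin 4 → ℕ) → Prop}
    (R : Rules E) (Z : Set (ProjLine × ProjLine))
    (hE : ∀ P1 ∈ Z, ∀ P2 ∈ Z, ∀ P3 ∈ Z, ∀ P4 ∈ Z, P1 ≠ P2 → P1 ≠ P3 → P1 ≠ P4 → P2 ≠ P3 →
      P2 ≠ P4 → P3 ≠ P4 → E ![P1, P2, P3, P4] 7 7 (fun _ => 6))
    (N1 : ∀ v h, ∃ P ∈ Z, P.1 ≠ v ∧ P.2 ≠ h)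
    (N3 : ∀ v v' h h', ∃ P ∈ Z, ¬ ((P.1 = v ∨ P.1 = v') ∧ (P.2 = h ∨ P.2 = h')))
    {P1 P2 : ProjLine × ProjLine} (hP1 : P1 ∈ Z) (hP2 : P2 ∈ Z) (h12 : P1 ≠ P2)
    (hx : P2.1 = P1.1) : False := by
  have y12 : P1.2 ≠ P2.2 := fun h => h12 (Prod.ext hx.symm h)
  -- the configuration lemmas with automatic distinctness
  have neX : ∀ {P Q : ProjLine × ProjLine}, P.1 ≠ Q.1 → P ≠ Q := fun h e => h (by rw [e])
  have neY : ∀ {P Q : ProjLine × ProjLine}, P.2 ≠ Q.2 → P ≠ Q := fun h e => h (by rw [e])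
  have c2P3 : ∀ P1 ∈ Z, ∀ P2 ∈ Z, ∀ P3 ∈ Z, ∀ P4 ∈ Z, P2.1 = P1.1 → P4.1 = P3.1 → P3.1 ≠ P1.1 →
      P1.2 ≠ P2.2 → P1.2 ≠ P3.2 → P1.2 ≠ P4.2 → P2.2 ≠ P3.2 → P2.2 ≠ P4.2 → P3.2 ≠ P4.2 →
      False := by
    intro P1 m1 P2 m2 P3 m3 P4 m4 a b c d e f g h i
    exact cfg_2P3 R (hE P1 m1 P2 m2 P3 m3 P4 m4 (neY d) (neY e) (neY f) (neY g) (neY h) (neY i))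
      a b c d e f g h i
  have cP5v : ∀ P1 ∈ Z, ∀ P2 ∈ Z, ∀ P3 ∈ Z, ∀ P4 ∈ Z, P2.1 = P1.1 → P4.1 = P3.1 → P3.1 ≠ P1.1 →
      P3.2 = P1.2 → P1.2 ≠ P2.2 → P1.2 ≠ P4.2 → P2.2 ≠ P4.2 → False := by
    intro P1 m1 P2 m2 P3 m3 P4 m4 a b c d e f g
    exact cfg_P5v R (hE P1 m1 P2 m2 P3 m3 P4 m4 (neY e) (neX c.symm) (neY f)
      (neX (by rw [a]; exact c.symm)) (neY g) (neY (by rw [d]; exact f))) a b c d e f g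
  have cP5h : ∀ P1 ∈ Z, ∀ P2 ∈ Z, ∀ P3 ∈ Z, ∀ P4 ∈ Z, P2.1 = P1.1 → P3.1 ≠ P1.1 → P4.1 ≠ P1.1 →
      P3.1 ≠ P4.1 → P3.2 = P1.2 → P4.2 = P2.2 → P1.2 ≠ P2.2 → False := by
    intro P1 m1 P2 m2 P3 m3 P4 m4 a b c d e f g
    exact cfg_P5h R (hE P1 m1 P2 m2 P3 m3 P4 m4 (neY g) (neX b.symm) (neX c.symm)
      (neX (by rw [a]; exact b.symm)) (neX (by rw [a]; exact c.symm)) (neX d)) a b c d e f g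
  have cP32 : ∀ P1 ∈ Z, ∀ P2 ∈ Z, ∀ P3 ∈ Z, ∀ P4 ∈ Z, P2.1 = P1.1 → P3.1 ≠ P1.1 → P4.1 ≠ P1.1 →
      P3.1 ≠ P4.1 → P1.2 ≠ P2.2 → P1.2 ≠ P3.2 → P1.2 ≠ P4.2 → P2.2 ≠ P3.2 → P2.2 ≠ P4.2 →
      P3.2 ≠ P4.2 → False := by
    intro P1 m1 P2 m2 P3 m3 P4 m4 a b c d y e f g h i
    exact cfg_P32 R (hE P1 m1 P2 m2 P3 m3 P4 m4 (neY y) (neY e) (neY f) (neY g) (neY h) (neY i))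
      a b c d e f g h i
  have cP41 : ∀ P1 ∈ Z, ∀ P2 ∈ Z, ∀ P3 ∈ Z, ∀ P4 ∈ Z, P2.1 = P1.1 → P3.1 ≠ P1.1 → P4.1 ≠ P1.1 →
      P3.1 ≠ P4.1 → P3.2 = P1.2 → P1.2 ≠ P2.2 → P1.2 ≠ P4.2 → P2.2 ≠ P4.2 → False := by
    intro P1 m1 P2 m2 P3 m3 P4 m4 a b c d e f g h
    exact cfg_P41 R (hE P1 m1 P2 m2 P3 m3 P4 m4 (neY f) (neX b.symm) (neX c.symm)
      (neX (by rw [a]; exact b.symm)) (neX (by rw [a]; exact c.symm)) (neX d)) a b c d e f g h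
  obtain ⟨P3, hP3, x3, -⟩ := N1 P1.1 P1.2
  obtain ⟨P4, hP4, x4, y4⟩ := N1 P1.1 P3.2
  by_cases x34 : P4.1 = P3.1
  · -- grid lemma
    have grid : ∀ P3 ∈ Z, ∀ P4 ∈ Z, P3.1 ≠ P1.1 → P4.1 = P3.1 → P3.2 = P1.2 → P4.2 = P2.2 →
        False := by
      intro P3 m3 P4 m4 a b c d
      obtain ⟨P5, m5, h5⟩ := N3 P1.1 P3.1 P1.2 P2.2
      by_cases e1 : P5.1 = P1.1
      · refine cP5v P1 hP1 P5 m5 P3 m3 P4 m4 ?_ ?_ ?_ ?_ ?_ ?_ ?_ <;> grind only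
      · by_cases e2 : P5.1 = P3.1
        · refine cP5v P3 m3 P5 m5 P1 hP1 P2 hP2 ?_ ?_ ?_ ?_ ?_ ?_ ?_ <;> grind only
        · by_cases e3 : P5.2 = P1.2
          · refine cP5h P1 hP1 P2 hP2 P5 m5 P4 m4 ?_ ?_ ?_ ?_ ?_ ?_ ?_ <;> grind only
          · by_cases e4 : P5.2 = P2.2
            · refine cP5h P1 hP1 P2 hP2 P3 m3 P5 m5 ?_ ?_ ?_ ?_ ?_ ?_ ?_ <;> grind only
            · refine cP41 P1 hP1 P2 hP2 P3 m3 P5 m5 ?_ ?_ ?_ ?_ ?_ ?_ ?_ ?_ <;> grind only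
    by_cases a : P3.2 = P1.2
    · by_cases b : P4.2 = P2.2
      · exact grid P3 hP3 P4 hP4 x3 x34 a b
      · refine cP5v P1 hP1 P2 hP2 P3 hP3 P4 hP4 ?_ ?_ ?_ ?_ ?_ ?_ ?_ <;> grind only
    · by_cases b : P3.2 = P2.2
      · by_cases c : P4.2 = P1.2
        · exact grid P4 hP4 P3 hP3 x4 x34.symm c b
        · refine cP5v P2 hP2 P1 hP1 P3 hP3 P4 hP4 ?_ ?_ ?_ ?_ ?_ ?_ ?_ <;> grind only
      · by_cases c : P4.2 = P1.2
        · refine cP5v P1 hP1 P2 hP2 P4 hP4 P3 hP3 ?_ ?_ ?_ ?_ ?_ ?_ ?_ <;> grind only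
        · by_cases d : P4.2 = P2.2
          · refine cP5v P2 hP2 P1 hP1 P4 hP4 P3 hP3 ?_ ?_ ?_ ?_ ?_ ?_ ?_ <;> grind only
          · refine c2P3 P1 hP1 P2 hP2 P3 hP3 P4 hP4 ?_ ?_ ?_ ?_ ?_ ?_ ?_ ?_ ?_ <;> grind only
  · by_cases a : P3.2 = P1.2
    · by_cases b : P4.2 = P2.2
      · refine cP5h P1 hP1 P2 hP2 P3 hP3 P4 hP4 ?_ ?_ ?_ ?_ ?_ ?_ ?_ <;> grind only
      · refine cP41 P1 hP1 P2 hP2 P3 hP3 P4 hP4 ?_ ?_ ?_ ?_ ?_ ?_ ?_ ?_ <;> grind only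
    · by_cases b : P3.2 = P2.2
      · by_cases c : P4.2 = P1.2
        · refine cP5h P2 hP2 P1 hP1 P3 hP3 P4 hP4 ?_ ?_ ?_ ?_ ?_ ?_ ?_ <;> grind only
        · refine cP41 P2 hP2 P1 hP1 P3 hP3 P4 hP4 ?_ ?_ ?_ ?_ ?_ ?_ ?_ ?_ <;> grind only
      · by_cases c : P4.2 = P1.2
        · refine cP41 P1 hP1 P2 hP2 P4 hP4 P3 hP3 ?_ ?_ ?_ ?_ ?_ ?_ ?_ ?_ <;> grind only
        · by_cases d : P4.2 = P2.2
          · refine cP41 P2 hP2 P1 hP1 P4 hP4 P3 hP3 ?_ ?_ ?_ ?_ ?_ ?_ ?_ ?_ <;> grind only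
          · refine cP32 P1 hP1 P2 hP2 P3 hP3 P4 hP4 ?_ ?_ ?_ ?_ ?_ ?_ ?_ ?_ ?_ ?_ <;> grind only

/-- Four points with distinct coordinates, the fourth off the conic through the first three. -/
lemma cfg_A {P1 P2 P3 P4 : ProjLine × ProjLine} {L : R4}
    (hE : EE ![P1, P2, P3, P4] 7 7 (fun _ => 6)) (hL : Irreducible L) (hLb : IsBiForm L 1 1)
    (hord : ∀ S, ordP S L ≤ 1) (e1 : evP P1 L = 0) (e2 : evP P2 L = 0) (e3 : evP P3 L = 0)
    (e4 : evP P4 L ≠ 0) (h12 : Gen P1 P2) (h14 : Gen P1 P4) (h24 : Gen P2 P4)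
    (h34 : Gen P3 P4) : False := by
  obtain ⟨-, -, h⟩ := EE_iter hL hLb hord ![true, true, true, false] ![true, true, true, false]
    (by simp [forall_fin4, e1, e2, e3]) (by simp [forall_fin4, e4]) hE 4 (by decide)
  obtain ⟨-, -, h⟩ := rules_EE.C 0 1 3 ![true, true, false, true] (by decide) h12 h14 h24 h 3
    (by decide)
  obtain ⟨h, -⟩ := rules_EE.V P4.1 ![false, false, false, true]
    (by simp [forall_fin4, h14.1, h24.1, h34.1]) h 1 (by decide)
  revert h; decide

theorem partII (Z : Finset (ProjLine × ProjLine))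
    (hno : ∀ G, IsBiForm G 1 1 → (∀ P ∈ Z, evP P G = 0) → G = 0)
    (hno2 : ∀ G, IsBiForm G 2 2 → (∀ P ∈ Z, G ∈ pointIdeal P ^ 2) → G = 0)
    {F : R4} (hF0 : F ≠ 0) (hF : IsBiForm F 7 7)
    (hFZ : ∀ P ∈ Z, (6 : ℕ∞) ≤ ordP P F) : False := by
  have hE : ∀ P1 ∈ Z, ∀ P2 ∈ Z, ∀ P3 ∈ Z, ∀ P4 ∈ Z, P1 ≠ P2 → P1 ≠ P3 → P1 ≠ P4 → P2 ≠ P3 →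
      P2 ≠ P4 → P3 ≠ P4 → EE ![P1, P2, P3, P4] 7 7 (fun _ => 6) := by
    intro P1 m1 P2 m2 P3 m3 P4 m4 a b c d e f
    refine ⟨inj4 a b c d e f, F, hF0, hF, ?_⟩
    rw [forall_fin4]
    exact ⟨hFZ _ m1, hFZ _ m2, hFZ _ m3, hFZ _ m4⟩
  have N1 : ∀ v h, ∃ P ∈ Z, P.1 ≠ v ∧ P.2 ≠ h := by
    intro v h
    by_contra! hc
    have hb : IsBiForm (lx v.rep * ly h.rep) 1 1 := (biform_lx v.rep).mul' (biform_ly h.rep)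
    refine mul_ne_zero (irr_lx v.rep_nonzero).ne_zero (irr_ly h.rep_nonzero).ne_zero
      (hno _ hb fun P hP => ?_)
    rw [map_mul, evP_lx, evP_ly]
    by_cases hv : P.1 = v
    · rw [hv, det2_self, zero_mul]
    · rw [hc P hP hv, det2_self, mul_zero]
  have N3 : ∀ v v' h h', ∃ P ∈ Z, ¬ ((P.1 = v ∨ P.1 = v') ∧ (P.2 = h ∨ P.2 = h')) := by
    intro v v' h h'
    by_contra! hc
    have hb : IsBiForm ((lx v.rep * lx v'.rep) * (ly h.rep * ly h'.rep)) 2 2 :=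
      ((biform_lx v.rep).mul' (biform_lx v'.rep)).mul' ((biform_ly h.rep).mul' (biform_ly h'.rep))
    refine mul_ne_zero (mul_ne_zero (irr_lx v.rep_nonzero).ne_zero (irr_lx v'.rep_nonzero).ne_zero)
      (mul_ne_zero (irr_ly h.rep_nonzero).ne_zero (irr_ly h'.rep_nonzero).ne_zero)
      (hno2 _ hb fun P hP => ?_)
    have hmx : lx P.1.rep ∈ pointIdeal P := Ideal.subset_span (Or.inl rfl)
    have hmy : ly P.2.rep ∈ pointIdeal P := Ideal.subset_span (Or.inr rfl)
    obtain ⟨h1, h2⟩ := hc P hP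
    rw [pow_two]
    apply Ideal.mul_mem_mul
    · rcases h1 with h1 | h1
      · rw [h1] at hmx; exact Ideal.mul_mem_right _ _ hmx
      · rw [h1] at hmx; exact Ideal.mul_mem_left _ _ hmx
    · rcases h2 with h2 | h2
      · rw [h2] at hmy; exact Ideal.mul_mem_right _ _ hmy
      · rw [h2] at hmy; exact Ideal.mul_mem_left _ _ hmy
  by_cases hV : ∃ P1 ∈ Z, ∃ P2 ∈ Z, P1 ≠ P2 ∧ P2.1 = P1.1
  · obtain ⟨P1, m1, P2, m2, hne, hx⟩ := hV
    exact case2 rules_EE (Z : Set _) hE N1 N3 m1 m2 hne hx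
  by_cases hH : ∃ P1 ∈ Z, ∃ P2 ∈ Z, P1 ≠ P2 ∧ P2.2 = P1.2
  · obtain ⟨P1, m1, P2, m2, hne, hx⟩ := hH
    refine case2 rules_swap {P | P.swap ∈ Z} ?_ ?_ ?_ (P1 := P1.swap) (P2 := P2.swap)
      (by simpa using m1) (by simpa using m2) (fun h => hne (Prod.swap_injective h)) hx
    · intro P1 m1 P2 m2 P3 m3 P4 m4 a b c d e f
      have := hE P1.swap m1 P2.swap m2 P3.swap m3 P4.swap m4
        (Prod.swap_injective.ne a) (Prod.swap_injective.ne b) (Prod.swap_injective.ne c)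
        (Prod.swap_injective.ne d) (Prod.swap_injective.ne e) (Prod.swap_injective.ne f)
      convert this using 1
      funext k
      fin_cases k <;> rfl
    · intro v h
      obtain ⟨P, hP, h1, h2⟩ := N1 h v
      exact ⟨P.swap, by simpa using hP, h2, h1⟩
    · intro v v' h h'
      obtain ⟨P, hP, h1⟩ := N3 h h' v v'
      exact ⟨P.swap, by simpa using hP, fun hc => h1 ⟨hc.2, hc.1⟩⟩
  have gen : ∀ P ∈ Z, ∀ Q ∈ Z, P ≠ Q → Gen P Q := by
    intro P hP Q hQ hne
    exact ⟨fun h => hV ⟨P, hP, Q, hQ, hne, h.symm⟩, fun h => hH ⟨P, hP, Q, hQ, hne, h.symm⟩⟩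
  let o : ProjLine := Projectivization.mk ℂ ![1, 0] (by
    intro h; have := congrFun h 0; simp at this)
  obtain ⟨P1, m1, -⟩ := N1 o o
  obtain ⟨P2, m2, h2, -⟩ := N1 P1.1 o
  obtain ⟨P3, m3, h3, h3'⟩ := N1 P1.1 P2.2
  have g12 := gen P1 m1 P2 m2 (by rintro rfl; exact h2 rfl)
  have g13 := gen P1 m1 P3 m3 (by rintro rfl; exact h3 rfl)
  have g23 := gen P2 m2 P3 m3 (by rintro rfl; exact h3' rfl)
  obtain ⟨L, hL, hLb, hord, e1, e2, e3⟩ :=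
    exists_conic g12.1 g13.1 g23.1 g12.2 g13.2 g23.2
  obtain ⟨P4, m4, e4⟩ : ∃ P ∈ Z, evP P L ≠ 0 := by
    by_contra! hc
    exact hL.ne_zero (hno L hLb hc)
  have n14 : P1 ≠ P4 := by rintro rfl; exact e4 e1
  have n24 : P2 ≠ P4 := by rintro rfl; exact e4 e2
  have n34 : P3 ≠ P4 := by rintro rfl; exact e4 e3
  exact cfg_A (hE P1 m1 P2 m2 P3 m3 P4 m4 (fun h => g12.1 (by rw [h])) (fun h => g13.1 (by rw [h]))
    n14 (fun h => g23.1 (by rw [h])) n24 n34) hL hLb hord e1 e2 e3 e4 g12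
    (gen _ m1 _ m4 n14) (gen _ m2 _ m4 n24) (gen _ m3 _ m4 n34)

lemma alpha_spec {J : Ideal R4} (h : alphaStar J ≠ 0) :
    ∃ F ∈ J, F ≠ 0 ∧ IsBiForm F (alphaStar J) (alphaStar J) :=
  Nat.sInf_mem (Nat.nonempty_of_pos_sInf (Nat.pos_of_ne_zero h))

lemma alpha_min {J : Ideal R4} {t : ℕ} {F : R4} (hF : F ∈ J) (hb : IsBiForm F t t)
    (ht : t < alphaStar J) : F = 0 := by
  by_contra h0
  exact Nat.notMem_of_lt_sInf ht ⟨F, hF, h0, hb⟩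

lemma mem_symbPow {Z : Finset (ProjLine × ProjLine)} {m : ℕ} {F : R4} :
    F ∈ symbPow Z m ↔ ∀ P ∈ Z, F ∈ pointIdeal P ^ m := by
  simp [symbPow, Submodule.mem_iInf]

/-- If the invariant `α*` of the radical ideal `I` of a finite set `Z` of distinct points of
`ℙ¹ × ℙ¹` jumps by exactly `1` in five consecutive steps, i.e.
`α*(I^{(6)}) = α*(I^{(5)}) + 1 = α*(I^{(4)}) + 2 = α*(I^{(3)}) + 3 = α*(I^{(2)}) + 4 = α*(I) + 5`,
then `α*(I) = 1`, i.e. `Z` is contained in a divisor of bidegree `(1,1)`. -/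
theorem alphaStar_five_jumps_by_one (Z : Finset (ProjLine × ProjLine))
    (h5 : alphaStar (symbPow Z 6) = alphaStar (symbPow Z 5) + 1)
    (h4 : alphaStar (symbPow Z 6) = alphaStar (symbPow Z 4) + 2)
    (h3 : alphaStar (symbPow Z 6) = alphaStar (symbPow Z 3) + 3)
    (h2 : alphaStar (symbPow Z 6) = alphaStar (symbPow Z 2) + 4)
    (h1 : alphaStar (symbPow Z 6) = alphaStar (symbPow Z 1) + 5) :
    alphaStar (symbPow Z 1) = 1 := by
  obtain ⟨F, hFm, hF0, hF⟩ := alpha_spec (J := symbPow Z 6) (by omega)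
  rw [mem_symbPow] at hFm
  have hFZ : ∀ P ∈ Z, (6 : ℕ∞) ≤ ordP P F := fun P hP => le_ordP_of_mem (hFm P hP)
  have hno : ∀ t < alphaStar (symbPow Z 1), ∀ G, IsBiForm G t t → (∀ P ∈ Z, evP P G = 0) →
      G = 0 := by
    intro t ht G hG hv
    refine alpha_min (J := symbPow Z 1) ?_ hG ht
    rw [mem_symbPow]
    intro P hP
    rw [pow_one]
    exact mem_of_evP hG (hv P hP)
  obtain h0 | h0 | h0 | h0 : alphaStar (symbPow Z 1) = 0 ∨ alphaStar (symbPow Z 1) = 1 ∨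
      alphaStar (symbPow Z 1) = 2 ∨ 3 ≤ alphaStar (symbPow Z 1) := by omega
  · exfalso
    have hone : IsBiForm (1 : R4) 0 0 := isWeightedHomogeneous_one ℂ biWeight
    have hZ : Z.Nonempty := by
      rw [Finset.nonempty_iff_ne_empty]
      rintro rfl
      exact one_ne_zero (alpha_min (J := symbPow ∅ 6) (by simp [mem_symbPow]) hone (by omega))
    -- the infimum for the first power is attained because the set is nonempty
    have hne : {t : ℕ | ∃ F ∈ symbPow Z 1, F ≠ 0 ∧ IsBiForm F t t}.Nonempty :=
      ⟨_, F, mem_symbPow.2 fun P hP => Ideal.pow_le_pow_right (by norm_num) (hFm P hP), hF0, hF⟩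
    have hmem := Nat.sInf_mem hne
    rw [show sInf _ = 0 from h0] at hmem
    obtain ⟨G, hG, hG0, hGb⟩ := hmem
    obtain ⟨P, hP⟩ := hZ
    have hGP := le_ordP_of_mem (mem_symbPow.1 hG P hP)
    have hGC : G = C (coeff 0 G) := by
      ext d
      rw [coeff_C]
      split_ifs with hd
      · rw [hd]
      · by_contra hc
        have hw := hGb hc
        rw [weight_bi, Prod.mk.injEq] at hw
        apply hd
        ext (i | i) <;> fin_cases i <;> simp <;> omega
    rw [Nat.cast_one, one_le_ordP, hGC] at hGP
    have : coeff 0 G = 0 := by rw [← hGP]; exact ((evP P).commutes _).symm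
    rw [this, C_0] at hGC
    exact hG0 hGC
  · exact h0
  · exfalso
    have h6 : alphaStar (symbPow Z 6) = 7 := by omega
    rw [h6] at hF
    refine partII Z (hno 1 (by omega)) ?_ hF0 hF hFZ
    intro G hG hv
    exact alpha_min (mem_symbPow.2 hv) hG (by omega)
  · exfalso
    obtain ⟨n, hn⟩ : ∃ n, alphaStar (symbPow Z 1) = n + 1 := ⟨_, (Nat.sub_add_cancel (by omega)).symm⟩
    have h6 : alphaStar (symbPow Z 6) = n + 6 := by omega
    rw [h6] at hF
    exact partI Z n (by omega) (hno n (by omega)) hF0 hF hFZ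
end
end

section
/- Let Z be the set of the four points P₁ = ([1:0],[1:0]), P₂ = ([1:0],[1:1]), P₃ = ([1:1],[1:0]), P₄ = ([0:1],[1:1]) of X = ℙ¹×ℙ¹ and let I = I(Z) be its radical ideal. Then α*(I^{(m)}) = m + 1 for m = 1, 2, 3, 4, 5. In particular the chain of five consecutive jumps by 1 in the Chudnovsky-type classification theorem cannot be shortened to four. -/
open MvPolynomial

noncomputable section

/-- The point `([1:0],[1:0])` of `ℙ¹ × ℙ¹`. -/
def P₁ : ProjLine × ProjLine :=
  (Projectivization.mk ℂ ![1, 0] (fun h => one_ne_zero (congrFun h 0)),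
   Projectivization.mk ℂ ![1, 0] (fun h => one_ne_zero (congrFun h 0)))

/-- The point `([1:0],[1:1])` of `ℙ¹ × ℙ¹`. -/
def P₂ : ProjLine × ProjLine :=
  (Projectivization.mk ℂ ![1, 0] (fun h => one_ne_zero (congrFun h 0)),
   Projectivization.mk ℂ ![1, 1] (fun h => one_ne_zero (congrFun h 0)))

/-- The point `([1:1],[1:0])` of `ℙ¹ × ℙ¹`. -/
def P₃ : ProjLine × ProjLine :=
  (Projectivization.mk ℂ ![1, 1] (fun h => one_ne_zero (congrFun h 0)),
   Projectivization.mk ℂ ![1, 0] (fun h => one_ne_zero (congrFun h 0)))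

/-- The point `([0:1],[1:1])` of `ℙ¹ × ℙ¹`. -/
def P₄ : ProjLine × ProjLine :=
  (Projectivization.mk ℂ ![0, 1] (fun h => one_ne_zero (congrFun h 1)),
   Projectivization.mk ℂ ![1, 1] (fun h => one_ne_zero (congrFun h 0)))

open Classical in
/-- The set `Z = {P₁, P₂, P₃, P₄}`. -/
def Z14 : Finset (ProjLine × ProjLine) := {P₁, P₂, P₃, P₄}

lemma pointIdeal_mk (v w : Fin 2 → ℂ) (hv : v ≠ 0) (hw : w ≠ 0) :
    pointIdeal (Projectivization.mk ℂ v hv, Projectivization.mk ℂ w hw) =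
      Ideal.span { C (v 1) * X (Sum.inl 0) - C (v 0) * X (Sum.inl 1),
        C (w 1) * X (Sum.inr 0) - C (w 0) * X (Sum.inr 1) } := by
  obtain ⟨a, ha⟩ := Projectivization.exists_smul_eq_mk_rep ℂ v hv
  obtain ⟨b, hb⟩ := Projectivization.exists_smul_eq_mk_rep ℂ w hw
  have ua : IsUnit (C (a : ℂ) : R4) := a.isUnit.map C
  have ub : IsUnit (C (b : ℂ) : R4) := b.isUnit.map C
  unfold pointIdeal
  simp only [← ha, ← hb, Pi.smul_apply, Units.smul_def, smul_eq_mul, C_mul]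
  rw [Ideal.span_insert, Ideal.span_insert]
  rw [← Ideal.span_singleton_mul_left_unit ua (C (v 1) * X (Sum.inl 0) - C (v 0) * X (Sum.inl 1)),
    ← Ideal.span_singleton_mul_left_unit ub (C (w 1) * X (Sum.inr 0) - C (w 0) * X (Sum.inr 1))]
  simp only [mul_sub, mul_assoc]

lemma pI1 : pointIdeal P₁ = Ideal.span {X (Sum.inl 1), X (Sum.inr 1)} := by
  rw [P₁, pointIdeal_mk, Ideal.span_insert, Ideal.span_insert]
  simp [Ideal.span_singleton_neg]

lemma pI2 : pointIdeal P₂ = Ideal.span {X (Sum.inl 1), X (Sum.inr 0) - X (Sum.inr 1)} := by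
  rw [P₂, pointIdeal_mk, Ideal.span_insert, Ideal.span_insert]
  simp [Ideal.span_singleton_neg]

lemma pI3 : pointIdeal P₃ = Ideal.span {X (Sum.inl 0) - X (Sum.inl 1), X (Sum.inr 1)} := by
  rw [P₃, pointIdeal_mk, Ideal.span_insert, Ideal.span_insert]
  simp [Ideal.span_singleton_neg]

lemma pI4 : pointIdeal P₄ = Ideal.span {X (Sum.inl 0), X (Sum.inr 0) - X (Sum.inr 1)} := by
  rw [P₄, pointIdeal_mk, Ideal.span_insert, Ideal.span_insert]
  simp [Ideal.span_singleton_neg]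

lemma mem_symb (F : R4) (m : ℕ) : F ∈ symbPow Z14 m ↔
    F ∈ pointIdeal P₁ ^ m ∧ F ∈ pointIdeal P₂ ^ m ∧ F ∈ pointIdeal P₃ ^ m ∧
      F ∈ pointIdeal P₄ ^ m := by
  simp [symbPow, Z14, Ideal.mem_iInf]

lemma mem_pow_aux (f g r : R4) (a b m : ℕ) (h : m ≤ a + b) :
    r * (f ^ a * g ^ b) ∈ (Ideal.span {f, g} : Ideal R4) ^ m := by
  apply Ideal.mul_mem_left
  apply Ideal.pow_le_pow_right h
  rw [pow_add]
  exact Ideal.mul_mem_mul (Ideal.pow_mem_pow (Ideal.subset_span (by simp)) _)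
    (Ideal.pow_mem_pow (Ideal.subset_span (by simp)) _)

lemma sub_ne_aux (i j : Fin 2 ⊕ Fin 2) (h : i ≠ j) : (X i - X j : R4) ≠ 0 := by
  rw [sub_ne_zero]
  exact fun e => h (X_injective e)

lemma upper (m t a a' b c d : ℕ) (h1 : m ≤ b + a) (h2 : m ≤ b + a') (h3 : m ≤ c + a)
    (h4 : m ≤ d + a') (hx : b + c + d = t) (hy : a + a' = t) :
    ∃ F ∈ symbPow Z14 m, F ≠ 0 ∧ IsBiForm F t t := by
  refine ⟨X (Sum.inl 1) ^ b * (X (Sum.inl 0) - X (Sum.inl 1)) ^ c * X (Sum.inl 0) ^ d *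
    (X (Sum.inr 1) ^ a * (X (Sum.inr 0) - X (Sum.inr 1)) ^ a'), ?_, ?_, ?_⟩
  · rw [mem_symb, pI1, pI2, pI3, pI4]
    refine ⟨?_, ?_, ?_, ?_⟩
    · convert mem_pow_aux _ _ ((X (Sum.inl 0) - X (Sum.inl 1)) ^ c * X (Sum.inl 0) ^ d *
        (X (Sum.inr 0) - X (Sum.inr 1)) ^ a') b a m h1 using 1
      ring
    · convert mem_pow_aux _ _ ((X (Sum.inl 0) - X (Sum.inl 1)) ^ c * X (Sum.inl 0) ^ d *
        X (Sum.inr 1) ^ a) b a' m h2 using 1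
      ring
    · convert mem_pow_aux _ _ (X (Sum.inl 1) ^ b * X (Sum.inl 0) ^ d *
        (X (Sum.inr 0) - X (Sum.inr 1)) ^ a') c a m h3 using 1
      ring
    · convert mem_pow_aux _ _ (X (Sum.inl 1) ^ b * (X (Sum.inl 0) - X (Sum.inl 1)) ^ c *
        X (Sum.inr 1) ^ a) d a' m h4 using 1
      ring
  · have e1 := sub_ne_aux (Sum.inl 0) (Sum.inl 1) (by simp)
    have e2 := sub_ne_aux (Sum.inr 0) (Sum.inr 1) (by simp)
    have e3 : ∀ i, (X i : R4) ≠ 0 := fun i => X_ne_zero i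
    exact mul_ne_zero (mul_ne_zero (mul_ne_zero (pow_ne_zero _ (e3 _)) (pow_ne_zero _ e1))
      (pow_ne_zero _ (e3 _))) (mul_ne_zero (pow_ne_zero _ (e3 _)) (pow_ne_zero _ e2))
  · have hX : ∀ i : Fin 2, IsWeightedHomogeneous biWeight (X (Sum.inl i) : R4) (1, 0) :=
      fun i => isWeightedHomogeneous_X ℂ biWeight (Sum.inl i)
    have hY : ∀ i : Fin 2, IsWeightedHomogeneous biWeight (X (Sum.inr i) : R4) (0, 1) :=
      fun i => isWeightedHomogeneous_X ℂ biWeight (Sum.inr i)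
    have hXs : IsWeightedHomogeneous biWeight (X (Sum.inl 0) - X (Sum.inl 1) : R4) (1, 0) :=
      (weightedHomogeneousSubmodule ℂ biWeight (1, 0)).sub_mem (hX 0) (hX 1)
    have hYs : IsWeightedHomogeneous biWeight (X (Sum.inr 0) - X (Sum.inr 1) : R4) (0, 1) :=
      (weightedHomogeneousSubmodule ℂ biWeight (0, 1)).sub_mem (hY 0) (hY 1)
    have := ((((hX 1).pow b).mul (hXs.pow c)).mul ((hX 0).pow d)).mul
      (((hY 1).pow a).mul (hYs.pow a'))
    unfold IsBiForm
    convert this using 1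
    ext <;> simp <;> omega

/-- The coordinate ring used for the lower bound. -/
abbrev B4 : Type := MvPolynomial (Fin 2) (Polynomial ℂ)

/-- Images of the variables. -/
def imgVar : Fin 2 ⊕ Fin 2 → B4 :=
  Sum.elim ![C (1 - Polynomial.X), C Polynomial.X] ![X 0 + X 1, X 0]

/-- Dehomogenise in `x` by `x₀ + x₁ = 1`, and set `y₁ = u`, `y₀ = u + v`. -/
def Phi : R4 →ₐ[ℂ] B4 := aeval imgVar

lemma coeff_dvd (a : Polynomial ℂ) (i : Fin 2) (m : ℕ) (p : B4)
    (hp : p ∈ (Ideal.span {C a, X i} : Ideal B4) ^ m) (d : Fin 2 →₀ ℕ) :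
    a ^ (m - d i) ∣ coeff d p := by
  classical
  induction m generalizing p d with
  | zero => simp
  | succ m ih =>
    rw [pow_succ] at hp
    refine Submodule.mul_induction_on hp ?_ ?_
    · intro f hf g hg
      rw [Ideal.mem_span_pair] at hg
      obtain ⟨r, s, rfl⟩ := hg
      rw [show f * (r * C a + s * X i) = C a * (r * f) + (s * f) * X i by ring, coeff_add,
        coeff_C_mul, coeff_mul_X']
      have h1 := ih (r * f) (Ideal.mul_mem_left _ _ hf) d
      have h2 := ih (s * f) (Ideal.mul_mem_left _ _ hf) (d - Finsupp.single i 1)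
      apply dvd_add
      · refine (pow_dvd_pow a (show m + 1 - d i ≤ (m - d i) + 1 by omega)).trans ?_
        rw [pow_succ, mul_comm]
        exact mul_dvd_mul_left _ h1
      · split_ifs with h
        · rw [Finsupp.mem_support_iff] at h
          refine (pow_dvd_pow a ?_).trans h2
          simp
          omega
        · simp
    · intro f g hf hg
      rw [coeff_add]
      exact dvd_add hf hg

lemma biform_support {F : R4} {p q : ℕ} (hF : IsBiForm F p q) {d : Fin 2 ⊕ Fin 2 →₀ ℕ}
    (hd : coeff d F ≠ 0) :
    d (Sum.inl 0) + d (Sum.inl 1) = p ∧ d (Sum.inr 0) + d (Sum.inr 1) = q := by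
  have := hF hd
  rw [Finsupp.weight_apply, Finsupp.sum_fintype _ _ (by simp)] at this
  simpa [biWeight, Prod.ext_iff] using this

lemma Phi_eq (F : R4) : Phi F = ∑ d ∈ F.support,
    C (Polynomial.C (coeff d F) * ((1 - Polynomial.X) ^ d (Sum.inl 0) *
      Polynomial.X ^ d (Sum.inl 1))) *
      MvPolynomial.map Polynomial.C ((X 0 + X 1) ^ d (Sum.inr 0) * X 0 ^ d (Sum.inr 1)) := by
  unfold Phi
  rw [aeval_def, eval₂_eq']
  refine Finset.sum_congr rfl fun d _ => ?_
  have : algebraMap ℂ B4 (coeff d F) = C (Polynomial.C (coeff d F)) := rfl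
  rw [this]
  simp [imgVar, Fintype.prod_sum_type]
  ring

lemma Phi_coeff (F : R4) (e : Fin 2 →₀ ℕ) : coeff e (Phi F) = ∑ d ∈ F.support,
    (Polynomial.C (coeff d F) * ((1 - Polynomial.X) ^ d (Sum.inl 0) *
      Polynomial.X ^ d (Sum.inl 1))) *
      Polynomial.C (coeff e ((X 0 + X 1) ^ d (Sum.inr 0) * X 0 ^ d (Sum.inr 1))) := by
  rw [Phi_eq, coeff_sum]
  refine Finset.sum_congr rfl fun d _ => ?_
  rw [coeff_C_mul, coeff_map]

lemma Phi_degree {F : R4} {p q : ℕ} (hF : IsBiForm F p q) (e : Fin 2 →₀ ℕ) :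
    (coeff e (Phi F)).natDegree ≤ p := by
  rw [Phi_coeff]
  refine Polynomial.natDegree_sum_le_of_forall_le _ _ fun d hd => ?_
  have := (biform_support hF (mem_support_iff.mp hd)).1
  subst this
  have h1 : ((1 - Polynomial.X : Polynomial ℂ)).natDegree ≤ 1 := by compute_degree
  have h2 := Polynomial.natDegree_pow_le_of_le (d (Sum.inl 0)) h1
  refine (Polynomial.natDegree_mul_C_le _ _).trans ((Polynomial.natDegree_C_mul_le _ _).trans ?_)
  refine (Polynomial.natDegree_mul_le).trans ?_
  rw [Polynomial.natDegree_X_pow]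
  omega

lemma Phi_hom {F : R4} {p q : ℕ} (hF : IsBiForm F p q) (e : Fin 2 →₀ ℕ)
    (he : coeff e (Phi F) ≠ 0) : e 0 + e 1 = q := by
  by_contra hne
  apply he
  rw [Phi_coeff]
  refine Finset.sum_eq_zero fun d hd => ?_
  have h2 := (biform_support hF (mem_support_iff.mp hd)).2
  have hh : IsHomogeneous ((X 0 + X 1) ^ d (Sum.inr 0) * X 0 ^ d (Sum.inr 1) :
      MvPolynomial (Fin 2) ℂ) (1 * d (Sum.inr 0) + 1 * d (Sum.inr 1)) :=
    (((isHomogeneous_X ℂ 0).add (isHomogeneous_X ℂ 1)).pow _).mul ((isHomogeneous_X ℂ 0).pow _)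
  rw [hh.coeff_eq_zero, Polynomial.C_0, mul_zero]
  rw [Finsupp.degree_eq_sum, Fin.sum_univ_two]
  omega

lemma eval_scale {F : R4} {p q : ℕ} (hF : IsBiForm F p q) (l : ℂ) (x y : Fin 2 → ℂ) :
    eval (Sum.elim (fun i => l * x i) y) F = l ^ p * eval (Sum.elim x y) F := by
  rw [eval_eq', eval_eq', Finset.mul_sum]
  refine Finset.sum_congr rfl fun d hd => ?_
  have := (biform_support hF (mem_support_iff.mp hd)).1
  subst this
  simp [Fintype.prod_sum_type]
  ring

lemma Phi_inj {F : R4} {p q : ℕ} (hF : IsBiForm F p q) (h : Phi F = 0) : F = 0 := by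
  have key : ∀ z u v : ℂ, eval (Sum.elim ![1 - z, z] ![u + v, u]) F = 0 := by
    intro z u v
    have h1 : eval₂ (Polynomial.evalRingHom z) ![u, v] (Phi F) = 0 := by rw [h]; simp
    rw [← h1]
    have : (eval (Sum.elim ![1 - z, z] ![u + v, u]) : R4 →+* ℂ) =
        (eval₂Hom (Polynomial.evalRingHom z) ![u, v]).comp (Phi : R4 →+* B4) := by
      apply MvPolynomial.ringHom_ext
      · intro r
        have : Phi (C r) = C (Polynomial.C r) := by
          rw [Phi, aeval_C]; rfl
        simp [this]
      · intro i
        rcases i with i | i <;> fin_cases i <;> simp [Phi, imgVar]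
    exact congrArg (fun f : R4 →+* ℂ => f F) this
  have h0 : (X (Sum.inl 0) + X (Sum.inl 1)) * F = 0 := by
    apply MvPolynomial.funext
    intro w
    simp only [map_mul, map_add, eval_X, map_zero]
    by_cases hs : w (Sum.inl 0) + w (Sum.inl 1) = 0
    · rw [hs, zero_mul]
    · have h3 := key (w (Sum.inl 1) / (w (Sum.inl 0) + w (Sum.inl 1))) (w (Sum.inr 1))
        (w (Sum.inr 0) - w (Sum.inr 1))
      have h4 := eval_scale hF (w (Sum.inl 0) + w (Sum.inl 1))
        ![1 - w (Sum.inl 1) / (w (Sum.inl 0) + w (Sum.inl 1)),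
          w (Sum.inl 1) / (w (Sum.inl 0) + w (Sum.inl 1))]
        ![w (Sum.inr 1) + (w (Sum.inr 0) - w (Sum.inr 1)), w (Sum.inr 1)]
      rw [h3, mul_zero] at h4
      have h5 : w = Sum.elim (fun i => (w (Sum.inl 0) + w (Sum.inl 1)) *
        ![1 - w (Sum.inl 1) / (w (Sum.inl 0) + w (Sum.inl 1)),
          w (Sum.inl 1) / (w (Sum.inl 0) + w (Sum.inl 1))] i)
        ![w (Sum.inr 1) + (w (Sum.inr 0) - w (Sum.inr 1)), w (Sum.inr 1)] := by
        funext i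
        rcases i with i | i <;> fin_cases i <;> simp <;> field_simp
        ring
      rw [← h5] at h4
      rw [h4, mul_zero]
  rcases mul_eq_zero.mp h0 with h1 | h1
  · exfalso
    have := congrArg (eval (fun _ => (1 : ℂ))) h1
    norm_num at this
  · exact h1

lemma Phi_mem (f g : R4) (a : Polynomial ℂ) (i : Fin 2) (hf : Phi f = C a) (hg : Phi g = X i)
    (m : ℕ) (F : R4) (hF : F ∈ (Ideal.span {f, g} : Ideal R4) ^ m) (d : Fin 2 →₀ ℕ) :
    a ^ (m - d i) ∣ coeff d (Phi F) := by
  apply coeff_dvd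
  have := Ideal.mem_map_of_mem Phi hF
  rwa [Ideal.map_pow, Ideal.map_span, Set.image_pair, hf, hg] at this

lemma lower (m t : ℕ) (hm : 1 ≤ m) (ht : t ≤ m) (F : R4) (hF : F ∈ symbPow Z14 m)
    (hb : IsBiForm F t t) : F = 0 := by
  apply Phi_inj hb
  ext1 e
  rw [coeff_zero]
  by_contra hne
  have hsum := Phi_hom hb e hne
  have hdeg := Phi_degree hb e
  rw [mem_symb, pI1, pI2, pI3, pI4] at hF
  obtain ⟨h1, h2, h3, h4⟩ := hF
  have d1 := Phi_mem _ _ Polynomial.X 0 (by simp [Phi, imgVar]) (by simp [Phi, imgVar]) m F h1 e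
  have d2 := Phi_mem _ _ Polynomial.X 1 (by simp [Phi, imgVar]) (by simp [Phi, imgVar]) m F h2 e
  have d3 := Phi_mem _ _ (1 - Polynomial.X - Polynomial.X) 0 (by simp [Phi, imgVar])
    (by simp [Phi, imgVar]) m F h3 e
  have d4 := Phi_mem _ _ (1 - Polynomial.X) 1 (by simp [Phi, imgVar])
    (by simp [Phi, imgVar]) m F h4 e
  have d12 : (Polynomial.X : Polynomial ℂ) ^ (max (m - e 0) (m - e 1)) ∣ coeff e (Phi F) := by
    rcases max_choice (m - e 0) (m - e 1) with h | h <;> rw [h] <;> assumption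
  have c1 : IsCoprime (Polynomial.X : Polynomial ℂ) (1 - Polynomial.X - Polynomial.X) :=
    ⟨2, 1, by ring⟩
  have c2 : IsCoprime (Polynomial.X : Polynomial ℂ) (1 - Polynomial.X) := ⟨1, 1, by ring⟩
  have c3 : IsCoprime (1 - Polynomial.X - Polynomial.X : Polynomial ℂ) (1 - Polynomial.X) :=
    ⟨-1, 2, by ring⟩
  have d123 := (c1.pow (m := max (m - e 0) (m - e 1)) (n := m - e 0)).mul_dvd d12 d3
  have dall := (IsCoprime.mul_left (c2.pow (m := max (m - e 0) (m - e 1)) (n := m - e 1))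
    (c3.pow (m := m - e 0) (n := m - e 1))).mul_dvd d123 d4
  have hle := Polynomial.natDegree_le_of_dvd dall hne
  have n1 : (1 - Polynomial.X : Polynomial ℂ).natDegree = 1 := by
    compute_degree!
  have n2 : (1 - Polynomial.X - Polynomial.X : Polynomial ℂ).natDegree = 1 := by
    compute_degree!
  have z1 : (1 - Polynomial.X : Polynomial ℂ) ≠ 0 := by
    intro h; rw [h] at n1; simp at n1
  have z2 : (1 - Polynomial.X - Polynomial.X : Polynomial ℂ) ≠ 0 := by
    intro h; rw [h] at n2; simp at n2
  rw [Polynomial.natDegree_mul (mul_ne_zero (pow_ne_zero _ Polynomial.X_ne_zero)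
      (pow_ne_zero _ z2)) (pow_ne_zero _ z1),
    Polynomial.natDegree_mul (pow_ne_zero _ Polynomial.X_ne_zero) (pow_ne_zero _ z2),
    Polynomial.natDegree_pow, Polynomial.natDegree_pow, Polynomial.natDegree_pow, n1, n2,
    Polynomial.natDegree_X] at hle
  omega

/-- For the set `Z` of the four points `([1:0],[1:0])`, `([1:0],[1:1])`, `([1:1],[1:0])`,
`([0:1],[1:1])` with radical ideal `I`, one has `α*(I^{(m)}) = m + 1` for `m = 1,…,5`:
the chain of five consecutive jumps by `1` cannot be shortened to four. -/
theorem alphaStar_four_points_example :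
    ∀ m : ℕ, 1 ≤ m → m ≤ 5 → alphaStar (symbPow Z14 m) = m + 1 := by
  intro m h1 h5
  have hup : ∃ F ∈ symbPow Z14 m, F ≠ 0 ∧ IsBiForm F (m + 1) (m + 1) := by
    interval_cases m
    · exact upper 1 2 1 1 1 1 0 (by simp) (by simp) (by simp) (by simp) rfl rfl
    · exact upper 2 3 2 1 1 1 1 (by simp) (by simp) (by simp) (by simp) rfl rfl
    · exact upper 3 4 2 2 2 1 1 (by simp) (by simp) (by simp) (by simp) rfl rfl
    · exact upper 4 5 3 2 2 1 2 (by simp) (by simp) (by simp) (by simp) rfl rfl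
    · exact upper 5 6 3 3 2 2 2 (by simp) (by simp) (by simp) (by simp) rfl rfl
  apply le_antisymm
  · exact Nat.sInf_le hup
  · apply le_csInf ⟨m + 1, hup⟩
    rintro t ⟨F, hF, hne, hb⟩
    by_contra hlt
    exact hne (lower m t h1 (by omega) F hF hb)
end
end

section
/- Let a ≥ 5 be an integer, let G = Z_V × Z_H be an (a,a)-grid in X = ℙ¹×ℙ¹, let Q ∈ G, and let Z = G \ {Q} be the grid with the single point Q removed, with radical ideal I. Then for all k ≥ 1, α*(I^{(2k−1)}) = ka − 1 and α*(I^{(2k)}) = ka. In particular α*(I) = a − 1, so α*(I) can be arbitrarily large even though the sequence α*(I^{(m)}) has infinitely many jumps equal to 1. -/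
open MvPolynomial

noncomputable section

/-- Affine plane polynomials. -/
abbrev A2 : Type := MvPolynomial (Fin 2) ℂ

/-- The generic Taylor expansion at `s`. -/
def tay (s : Fin 2 → ℂ) : A2 →ₐ[ℂ] Polynomial A2 :=
  aeval (fun l => Polynomial.C (C (s l)) + Polynomial.X * Polynomial.C (X l))

/-- Vanishing to order at least `m` at `s`. -/
def VanOrd (f : A2) (s : Fin 2 → ℂ) (m : ℕ) : Prop :=
  (Polynomial.X : Polynomial A2) ^ m ∣ tay s f

theorem tay_X_sub_C (s : Fin 2 → ℂ) (i : Fin 2) (c : ℂ) :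
    tay s (X i - C c) = Polynomial.C (C (s i - c)) + Polynomial.X * Polynomial.C (X i) := by
  have h : tay s (C c) = Polynomial.C (C c) := by
    rw [tay, MvPolynomial.aeval_C]; rfl
  rw [map_sub, h]
  simp only [tay, aeval_X, map_sub]
  ring

theorem vanOrd_cancel (S : Finset ℂ) (i : Fin 2) (h : A2) (s : Fin 2 → ℂ) (m : ℕ)
    (hs : s i ∈ S) (hv : VanOrd ((∏ c ∈ S, (X i - C c)) * h) s (m + 1)) : VanOrd h s m := by
  unfold VanOrd at *
  rw [← Finset.mul_prod_erase _ _ hs, map_mul, map_mul, map_prod, tay_X_sub_C] at hv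
  simp only [sub_self, map_zero, zero_add] at hv
  have hX : Prime (Polynomial.X : Polynomial A2) := Polynomial.prime_X
  rw [pow_succ', mul_assoc, mul_assoc] at hv
  have hv2 := (mul_dvd_mul_iff_left hX.ne_zero).1 hv
  have hv3 := hX.pow_dvd_of_dvd_mul_left _ (by
    rw [Polynomial.X_dvd_iff, Polynomial.coeff_C_zero]
    exact X_ne_zero i) hv2
  refine hX.pow_dvd_of_dvd_mul_left _ ?_ hv3
  rw [hX.dvd_finsetProd_iff]
  rintro ⟨c, hc, hd⟩
  rw [tay_X_sub_C, Polynomial.X_dvd_iff] at hd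
  simp only [Polynomial.coeff_add, Polynomial.coeff_C_zero, Polynomial.mul_coeff_zero,
    Polynomial.coeff_X_zero, zero_mul, add_zero] at hd
  have := (C_eq_zero).1 hd
  exact (Finset.ne_of_mem_erase hc) (sub_eq_zero.1 this).symm

/-- Restriction to the line `X i = c`. -/
def restr (i : Fin 2) (c : ℂ) : A2 →ₐ[ℂ] Polynomial ℂ :=
  aeval (fun l => if l = i then Polynomial.C c else Polynomial.X)

theorem restr_natDegree {i j : Fin 2} (hij : i ≠ j) (c : ℂ) (f : A2) :
    (restr i c f).natDegree ≤ degreeOf j f := by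
  rw [restr, aeval_def, eval₂_eq']
  refine Polynomial.natDegree_sum_le_of_forall_le _ _ ?_
  intro d hd
  have hj := monomial_le_degreeOf j hd
  have hji : j ≠ i := hij.symm
  have h2 : ∏ l : Fin 2, (if l = i then (Polynomial.C c) else Polynomial.X) ^ d l =
      Polynomial.C (c ^ d i) * (Polynomial.X : Polynomial ℂ) ^ d j := by
    fin_cases i <;> fin_cases j <;> simp_all [mul_comm]
  rw [h2, ← mul_assoc]
  change ((Polynomial.C _ * Polynomial.C _) * _).natDegree ≤ _
  rw [← Polynomial.C_mul]
  exact (Polynomial.natDegree_C_mul_X_pow_le _ _).trans hj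

theorem restr_dvd {i j : Fin 2} (hij : i ≠ j) (f : A2) (s : Fin 2 → ℂ) (m : ℕ)
    (hv : VanOrd f s m) : (Polynomial.X - Polynomial.C (s j)) ^ m ∣ restr i (s i) f := by
  -- specialise the expansion
  let ψ : Polynomial A2 →+* Polynomial ℂ :=
    Polynomial.eval₂RingHom
      ((Polynomial.C).comp (MvPolynomial.eval (fun l => if l = i then (0:ℂ) else 1)))
      (Polynomial.X - Polynomial.C (s j))
  have h1 : ∀ g : A2, ψ (tay s g) = restr i (s i) g := by
    intro g
    have : (ψ.comp (tay s).toRingHom) = (restr i (s i)).toRingHom := by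
      apply MvPolynomial.ringHom_ext
      · intro r
        have : tay s (C r) = Polynomial.C (C r) := by
          rw [tay, MvPolynomial.aeval_C]; rfl
        simp only [RingHom.comp_apply, AlgHom.toRingHom_eq_coe, RingHom.coe_coe, this, restr,
          MvPolynomial.aeval_C, ψ]
        simp
      · intro l
        simp only [RingHom.comp_apply, AlgHom.toRingHom_eq_coe, RingHom.coe_coe, restr, tay,
          aeval_X, ψ]
        fin_cases i <;> fin_cases j <;> fin_cases l <;> simp_all
    exact RingHom.congr_fun this g
  have := map_dvd ψ hv
  rw [h1, map_pow] at this
  simpa [ψ] using this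

theorem restr_zero_dvd {i j : Fin 2} (hij : i ≠ j) (c : ℂ) (f : A2) (h : restr i c f = 0) :
    (X i - C c : A2) ∣ f := by
  let I : Ideal A2 := Ideal.span {X i - C c}
  have h1 : (Ideal.Quotient.mkₐ ℂ I).comp
      ((Polynomial.aeval (X j : A2)).comp (restr i c)) = Ideal.Quotient.mkₐ ℂ I := by
    apply MvPolynomial.algHom_ext
    intro l
    simp only [AlgHom.comp_apply, restr, aeval_X]
    by_cases hl : l = i
    · subst hl
      simp only [if_true, Polynomial.aeval_C]
      symm
      refine (Ideal.Quotient.eq).2 ?_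
      exact Ideal.subset_span rfl
    · have : l = j := by fin_cases i <;> fin_cases j <;> fin_cases l <;> simp_all
      simp [this, hij.symm]
  have h2 := AlgHom.congr_fun h1 f
  simp only [AlgHom.comp_apply, h, map_zero] at h2
  exact Ideal.mem_span_singleton.1 (Ideal.Quotient.eq_zero_iff_mem.1 h2.symm)

theorem line_dvd {i j : Fin 2} (hij : i ≠ j) (c : ℂ) (f : A2) (T : Finset ℂ) (m : ℕ)
    (hT : degreeOf j f < T.card * m)
    (hv : ∀ s : Fin 2 → ℂ, s i = c → s j ∈ T → VanOrd f s m) :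
    (X i - C c : A2) ∣ f := by
  apply restr_zero_dvd hij
  by_contra hne
  have hd : (∏ t ∈ T, (Polynomial.X - Polynomial.C t) ^ m) ∣ restr i c f := by
    apply Finset.prod_dvd_of_coprime
    · intro a _ b _ hab
      exact (Polynomial.pairwise_coprime_X_sub_C (Function.injective_id) hab).pow
    · intro t ht
      have := restr_dvd hij f (fun l => if l = i then c else t) m
        (hv _ (by simp) (by simpa [hij.symm] using ht))
      simpa [hij.symm] using this
  have h1 := Polynomial.natDegree_le_of_dvd hd hne
  rw [Polynomial.natDegree_prod_of_monic _ _
    (fun t _ => (Polynomial.monic_X_sub_C t).pow m)] at h1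
  simp only [Polynomial.natDegree_pow, Polynomial.natDegree_X_sub_C, mul_one,
    Finset.sum_const, smul_eq_mul] at h1
  have h2 := restr_natDegree hij c f
  omega

theorem X_sub_C_ne_zero' (i : Fin 2) (c : ℂ) : (X i - C c : A2) ≠ 0 := by
  intro h
  have := congrArg (MvPolynomial.eval (fun _ => c + 1)) h
  simp at this

theorem degreeOf_line_self (i : Fin 2) (c : ℂ) : degreeOf i (X i - C c : A2) = 1 := by
  rw [sub_eq_add_neg, degreeOf_add_eq_of_degreeOf_lt, degreeOf_X_self]
  rw [degreeOf_neg, degreeOf_C, degreeOf_X_self]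
  exact one_pos

theorem isCoprime_lines (i : Fin 2) {c d : ℂ} (h : c ≠ d) :
    IsCoprime (X i - C c : A2) (X i - C d) := by
  have hd : d - c ≠ 0 := sub_ne_zero.2 h.symm
  refine ⟨C ((d - c)⁻¹), - C ((d - c)⁻¹), ?_⟩
  have : (C ((d - c)⁻¹) * (C d - C c) : A2) = 1 := by
    rw [← C_sub, ← C_mul, inv_mul_cancel₀ hd, C_1]
  linear_combination this

/-- Vanishing conditions at a grid minus a point. -/
def GridVan (S : Fin 2 → Finset ℂ) (Q : Fin 2 → ℂ) (f : A2) (m : ℕ) : Prop :=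
  ∀ s : Fin 2 → ℂ, (∀ l, s l ∈ S l) → s ≠ Q → VanOrd f s m

theorem strip {a : ℕ} {i j : Fin 2} (hij : i ≠ j) (S : Fin 2 → Finset ℂ) (hS : ∀ l, (S l).card = a)
    (Q : Fin 2 → ℂ) (f : A2) (hf : f ≠ 0) (m : ℕ)
    (hv : GridVan S Q f (m + 1)) (hdeg : degreeOf j f < (a - 1) * (m + 1)) :
    ∃ h : A2, h ≠ 0 ∧ GridVan S Q h m ∧ degreeOf i h + a = degreeOf i f ∧
      degreeOf j h ≤ degreeOf j f := by
  have hline : ∀ c ∈ S i, (X i - C c : A2) ∣ f := by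
    intro c hc
    refine line_dvd hij c f ((S j).erase (Q j)) (m + 1) ?_ ?_
    · refine hdeg.trans_le (Nat.mul_le_mul_right _ ?_)
      rw [← hS j]
      exact Finset.pred_card_le_card_erase
    · intro s hsi hsj
      refine hv s ?_ ?_
      · intro l
        have : l = i ∨ l = j := by fin_cases i <;> fin_cases j <;> fin_cases l <;> simp_all
        rcases this with rfl | rfl
        · rwa [hsi]
        · exact Finset.mem_of_mem_erase hsj
      · rintro rfl
        exact Finset.ne_of_mem_erase hsj rfl
  have hp : (∏ c ∈ S i, (X i - C c : A2)) ∣ f :=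
    Finset.prod_dvd_of_coprime (fun c _ d _ hcd => isCoprime_lines i hcd) hline
  obtain ⟨h, rfl⟩ := hp
  have hp0 := left_ne_zero_of_mul hf
  have hh0 := right_ne_zero_of_mul hf
  refine ⟨h, hh0, ?_, ?_, ?_⟩
  · intro s hs hsQ
    exact vanOrd_cancel (S i) i h s m (hs i) (hv s hs hsQ)
  · rw [degreeOf_mul_eq hp0 hh0, degreeOf_prod_eq _ _ (fun c _ => X_sub_C_ne_zero' i c)]
    simp only [degreeOf_line_self, Finset.sum_const, hS, smul_eq_mul, mul_one]
    ring
  · rw [degreeOf_mul_eq hp0 hh0]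
    omega

theorem strip2 {a : ℕ} (S : Fin 2 → Finset ℂ) (hS : ∀ l, (S l).card = a)
    (Q : Fin 2 → ℂ) (f : A2) (hf : f ≠ 0) (m t : ℕ)
    (hv : GridVan S Q f (m + 2)) (hd0 : degreeOf 0 f ≤ t) (hd1 : degreeOf 1 f ≤ t)
    (h1 : t < (a - 1) * (m + 2)) (h2 : t < (a - 1) * (m + 1) + a) :
    a ≤ t ∧ ∃ h : A2, h ≠ 0 ∧ GridVan S Q h m ∧ degreeOf 0 h ≤ t - a ∧ degreeOf 1 h ≤ t - a := by
  obtain ⟨g, hg, gv, g0, g1⟩ := strip (i := 0) (j := 1) (by decide) S hS Q f hf (m + 1) hv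
    (hd1.trans_lt h1)
  obtain ⟨h, hh, hv', h1', h0'⟩ := strip (i := 1) (j := 0) (by decide) S hS Q g hg m gv
    (by omega)
  exact ⟨by omega, h, hh, hv', by omega, by omega⟩

theorem even_bound {a : ℕ} (ha : 2 ≤ a) (S : Fin 2 → Finset ℂ) (hS : ∀ l, (S l).card = a)
    (Q : Fin 2 → ℂ) (k : ℕ) : ∀ (f : A2) (_ : f ≠ 0) (t : ℕ)
    (_ : GridVan S Q f (2 * k)) (_ : degreeOf 0 f ≤ t) (_ : degreeOf 1 f ≤ t), k * a ≤ t := by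
  obtain ⟨b, rfl⟩ : ∃ b, a = b + 2 := ⟨a - 2, by omega⟩
  induction k with
  | zero => intros; omega
  | succ k ih =>
    intro f hf t hv h0 h1
    by_contra hlt
    push Not at hlt
    obtain ⟨hat, h, hh, hv', h0', h1'⟩ := strip2 S hS Q f hf (2 * k) t hv h0 h1
      (by simp only [show b + 2 - 1 = b + 1 by omega]; nlinarith)
      (by simp only [show b + 2 - 1 = b + 1 by omega]; nlinarith)
    have := ih h hh _ hv' h0' h1'
    rw [Nat.add_mul] at hlt
    omega

theorem odd_bound {a : ℕ} (ha : 2 ≤ a) (S : Fin 2 → Finset ℂ) (hS : ∀ l, (S l).card = a)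
    (Q : Fin 2 → ℂ) (k : ℕ) : ∀ (f : A2) (_ : f ≠ 0) (t : ℕ)
    (_ : GridVan S Q f (2 * k + 1)) (_ : degreeOf 0 f ≤ t) (_ : degreeOf 1 f ≤ t),
    (k + 1) * a ≤ t + 1 := by
  obtain ⟨b, rfl⟩ : ∃ b, a = b + 2 := ⟨a - 2, by omega⟩
  induction k with
  | zero =>
    intro f hf t hv h0 h1
    by_contra hlt
    obtain ⟨g, hg, gv, g0, g1⟩ := strip (i := 0) (j := 1) (by decide) S hS Q f hf 0 hv
      (by omega)
    omega
  | succ k ih =>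
    intro f hf t hv h0 h1
    by_contra hlt
    push Not at hlt
    obtain ⟨hat, h, hh, hv', h0', h1'⟩ := strip2 S hS Q f hf (2 * k + 1) t hv h0 h1
      (by simp only [show b + 2 - 1 = b + 1 by omega]; nlinarith)
      (by simp only [show b + 2 - 1 = b + 1 by omega]; nlinarith)
    have := ih h hh _ hv' h0' h1'
    rw [Nat.add_mul] at hlt
    omega

/-- Dehomogenisation in the charts determined by `r`. -/
def dehomVar (r : Fin 2 → ℂ) : Fin 2 ⊕ Fin 2 → A2 :=
  Sum.elim ![X 0, 1 + C (r 0) * X 0] ![X 1, 1 + C (r 1) * X 1]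

/-- Dehomogenisation. -/
def dehom (r : Fin 2 → ℂ) : R4 →ₐ[ℂ] A2 := aeval (dehomVar r)

/-- The denominator of the affine coordinate. -/
def den (r : ℂ) (p : ProjLine) : ℂ := p.rep 1 - r * p.rep 0

/-- Affine coordinate. -/
def aff (r : ℂ) (p : ProjLine) : ℂ := p.rep 0 / den r p

/-- The affine point. -/
def affPt (r : Fin 2 → ℂ) (P : ProjLine × ProjLine) : Fin 2 → ℂ := ![aff (r 0) P.1, aff (r 1) P.2]

theorem biform_weights {F : R4} {p q : ℕ} (hF : IsBiForm F p q) {d : Fin 2 ⊕ Fin 2 →₀ ℕ}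
    (hd : d ∈ F.support) :
    d (Sum.inl 0) + d (Sum.inl 1) = p ∧ d (Sum.inr 0) + d (Sum.inr 1) = q := by
  have h := hF (mem_support_iff.1 hd)
  rw [Finsupp.weight_apply, Finsupp.sum_fintype _ _ (by simp)] at h
  simp only [Fintype.sum_sum_type, Fin.sum_univ_two, biWeight, Sum.elim_inl, Sum.elim_inr] at h
  simpa using h

theorem biform_eval {F : R4} {p q : ℕ} (hF : IsBiForm F p q) (α β : ℂ) (x y : Fin 2 → ℂ) :
    MvPolynomial.eval (Sum.elim (fun i => α * x i) (fun i => β * y i)) F =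
      α ^ p * β ^ q * MvPolynomial.eval (Sum.elim x y) F := by
  rw [eval_eq', eval_eq', Finset.mul_sum]
  refine Finset.sum_congr rfl fun d hd => ?_
  obtain ⟨h1, h2⟩ := biform_weights hF hd
  simp only [Fintype.prod_sum_type, Fin.prod_univ_two, Sum.elim_inl, Sum.elim_inr, mul_pow]
  rw [← h1, ← h2, pow_add, pow_add]
  ring

theorem dehom_ne_zero {F : R4} {p q : ℕ} (hF : IsBiForm F p q) (h0 : F ≠ 0) (r : Fin 2 → ℂ) :
    dehom r F ≠ 0 := by
  intro h
  let L : R4 := X (Sum.inl 1) - C (r 0) * X (Sum.inl 0)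
  let M : R4 := X (Sum.inr 1) - C (r 1) * X (Sum.inr 0)
  have hL : L ≠ 0 := by
    intro h
    have := congrArg (MvPolynomial.eval (Sum.elim ![0, 1] ![0, 1])) h
    simp [L] at this
  have hM : M ≠ 0 := by
    intro h
    have := congrArg (MvPolynomial.eval (Sum.elim ![0, 1] ![0, 1])) h
    simp [M] at this
  have key : F * (L * M) = 0 := by
    apply MvPolynomial.funext
    intro z
    rw [map_zero, map_mul, map_mul]
    by_cases hl : MvPolynomial.eval z L = 0
    · simp [hl]
    by_cases hm : MvPolynomial.eval z M = 0
    · simp [hm]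
    set α := MvPolynomial.eval z L with hα
    set β := MvPolynomial.eval z M with hβ
    have hα' : α = z (Sum.inl 1) - r 0 * z (Sum.inl 0) := by simp [hα, L]
    have hβ' : β = z (Sum.inr 1) - r 1 * z (Sum.inr 0) := by simp [hβ, M]
    have hz : z = Sum.elim (fun i => α * (fun i => z (Sum.inl i) / α) i)
        (fun i => β * (fun i => z (Sum.inr i) / β) i) := by
      funext l
      rcases l with l | l <;> simp <;> field_simp
    have hev : MvPolynomial.eval (Sum.elim (fun i => z (Sum.inl i) / α)
        (fun i => z (Sum.inr i) / β)) F = 0 := by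
      have h3 := congrArg (MvPolynomial.eval ![z (Sum.inl 0) / α, z (Sum.inr 0) / β]) h
      rw [map_zero] at h3
      rw [← h3]
      have : (MvPolynomial.eval (Sum.elim (fun i => z (Sum.inl i) / α)
          (fun i => z (Sum.inr i) / β))) =
          (MvPolynomial.eval ![z (Sum.inl 0) / α, z (Sum.inr 0) / β]).comp
            (dehom r).toRingHom := by
        apply MvPolynomial.ringHom_ext
        · intro c
          simp [dehom]
        · intro l
          rcases l with l | l <;> fin_cases l <;> simp [dehom, dehomVar] <;> field_simp
          · rw [hα']; ring
          · rw [hβ']; ring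
      exact RingHom.congr_fun this F
    rw [hz, biform_eval hF, hev]
    simp
  exact (mul_ne_zero h0 (mul_ne_zero hL hM)) key

theorem degreeOf_one_add (i j : Fin 2) (c : ℂ) :
    degreeOf i (1 + C c * X j : A2) ≤ degreeOf i (X j : A2) := by
  refine (degreeOf_add_le _ _ _).trans (max_le ?_ ?_)
  · simp
  · exact degreeOf_C_mul_le _ _ _

theorem degreeOf_dehom_term (i : Fin 2) (r : Fin 2 → ℂ) (c : ℂ) (d : Fin 2 ⊕ Fin 2 →₀ ℕ) :
    degreeOf i (algebraMap ℂ A2 c * ∏ l, dehomVar r l ^ d l) ≤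
      (d (Sum.inl 0) + d (Sum.inl 1)) * degreeOf i (X 0 : A2) +
      (d (Sum.inr 0) + d (Sum.inr 1)) * degreeOf i (X 1 : A2) := by
  refine (degreeOf_C_mul_le _ _ _).trans ?_
  refine (degreeOf_prod_le _ _ _).trans ?_
  simp only [Fintype.sum_sum_type, Fin.sum_univ_two, add_mul]
  refine add_le_add (add_le_add ?_ ?_) (add_le_add ?_ ?_) <;>
    refine (degreeOf_pow_le _ _ _).trans (Nat.mul_le_mul_left _ ?_)
  · exact le_rfl
  · exact degreeOf_one_add _ _ _
  · exact le_rfl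
  · exact degreeOf_one_add _ _ _

theorem dehom_degree {F : R4} {p q : ℕ} (hF : IsBiForm F p q) (r : Fin 2 → ℂ) :
    degreeOf 0 (dehom r F) ≤ p ∧ degreeOf 1 (dehom r F) ≤ q := by
  rw [dehom, aeval_def, eval₂_eq']
  constructor <;>
  · refine (degreeOf_sum_le _ _ _).trans (Finset.sup_le fun d hd => ?_)
    refine (degreeOf_dehom_term _ _ _ _).trans ?_
    obtain ⟨h1, h2⟩ := biform_weights hF hd
    simp [degreeOf_X, h1, h2]

theorem dehom_vanOrd (r : Fin 2 → ℂ) (P : ProjLine × ProjLine) (h0 : den (r 0) P.1 ≠ 0)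
    (h1 : den (r 1) P.2 ≠ 0) (F : R4) (m : ℕ) (hF : F ∈ pointIdeal P ^ m) :
    VanOrd (dehom r F) (affPt r P) m := by
  let φ : R4 →+* Polynomial A2 := (tay (affPt r P)).toRingHom.comp (dehom r).toRingHom
  have hmap : (pointIdeal P).map φ ≤ Ideal.span {Polynomial.X} := by
    rw [pointIdeal, Ideal.map_span, Ideal.span_le]
    have e0 : dehom r (C (P.1.rep 1) * X (Sum.inl 0) - C (P.1.rep 0) * X (Sum.inl 1)) =
        C (den (r 0) P.1) * (X 0 - C (affPt r P 0)) := by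
      have : (C (den (r 0) P.1) * C (affPt r P 0) : A2) = C (P.1.rep 0) := by
        rw [← C_mul]; simp only [affPt, aff, Matrix.cons_val_zero]; rw [mul_div_cancel₀ _ h0]
      rw [mul_sub, this]
      simp [dehom, dehomVar, den]
      ring
    have e1 : dehom r (C (P.2.rep 1) * X (Sum.inr 0) - C (P.2.rep 0) * X (Sum.inr 1)) =
        C (den (r 1) P.2) * (X 1 - C (affPt r P 1)) := by
      have : (C (den (r 1) P.2) * C (affPt r P 1) : A2) = C (P.2.rep 0) := by
        rw [← C_mul]; simp only [affPt, aff, Matrix.cons_val_one]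
        rw [Matrix.cons_val_fin_one, mul_div_cancel₀ _ h1]
      rw [mul_sub, this]
      simp [dehom, dehomVar, den]
      ring
    rintro _ ⟨g, hg, rfl⟩
    have hx : ∀ g : R4, φ g = tay (affPt r P) (dehom r g) := fun g => rfl
    simp only [Set.mem_insert_iff, Set.mem_singleton_iff] at hg
    rw [SetLike.mem_coe, Ideal.mem_span_singleton, hx]
    rcases hg with rfl | rfl
    · rw [e0, map_mul, tay_X_sub_C]
      simp only [sub_self, map_zero, zero_add]
      exact Dvd.dvd.mul_left (dvd_mul_right _ _) _
    · rw [e1, map_mul, tay_X_sub_C]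
      simp only [sub_self, map_zero, zero_add]
      exact Dvd.dvd.mul_left (dvd_mul_right _ _) _
  have h2 : φ F ∈ (Ideal.span {(Polynomial.X : Polynomial A2)}) ^ m := by
    refine Ideal.pow_right_mono hmap m ?_
    rw [← Ideal.map_pow]
    exact Ideal.mem_map_of_mem φ hF
  rw [Ideal.span_singleton_pow, Ideal.mem_span_singleton] at h2
  exact h2

theorem proj_eq_of_cross (p q : ProjLine) (h : p.rep 0 * q.rep 1 = p.rep 1 * q.rep 0) : p = q := by
  rw [← p.mk_rep, ← q.mk_rep, Projectivization.mk_eq_mk_iff']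
  have hq := q.rep_nonzero
  by_cases h0 : q.rep 0 = 0
  · have h1 : q.rep 1 ≠ 0 := by
      intro h1
      apply hq
      funext l
      fin_cases l <;> simp [h0, h1]
    refine ⟨p.rep 1 / q.rep 1, ?_⟩
    funext l
    fin_cases l
    · simp only [Fin.zero_eta, Pi.smul_apply, smul_eq_mul]
      field_simp
      linear_combination -h
    · simp only [Fin.mk_one, Pi.smul_apply, smul_eq_mul]
      field_simp
  · refine ⟨p.rep 0 / q.rep 0, ?_⟩
    funext l
    fin_cases l
    · simp only [Fin.zero_eta, Pi.smul_apply, smul_eq_mul]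
      field_simp
    · simp only [Fin.mk_one, Pi.smul_apply, smul_eq_mul]
      field_simp
      linear_combination h

theorem aff_inj {r : ℂ} {p q : ProjLine} (hp : den r p ≠ 0) (hq : den r q ≠ 0)
    (h : aff r p = aff r q) : p = q := by
  apply proj_eq_of_cross
  unfold aff at h
  rw [div_eq_div_iff hp hq] at h
  unfold den at h
  linear_combination h

theorem exists_chart (Z : Finset ProjLine) : ∃ r : ℂ, ∀ p ∈ Z, den r p ≠ 0 := by
  obtain ⟨r, hr⟩ := Infinite.exists_notMem_finset (Z.image fun p => p.rep 1 / p.rep 0)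
  refine ⟨r, fun p hp h => ?_⟩
  unfold den at h
  by_cases h0 : p.rep 0 = 0
  · apply p.rep_nonzero
    funext l
    rw [h0, mul_zero, sub_zero] at h
    fin_cases l <;> simp [h0, h]
  · apply hr
    rw [Finset.mem_image]
    refine ⟨p, hp, ?_⟩
    field_simp
    linear_combination h

theorem to_affine {a : ℕ} (ZV ZH : Finset ProjLine) (hV : ZV.card = a) (hH : ZH.card = a)
    (Q : ProjLine × ProjLine) (hQ : Q ∈ ZV ×ˢ ZH) (Z : Finset (ProjLine × ProjLine))
    (hZ : (Z : Set (ProjLine × ProjLine)) = ↑(ZV ×ˢ ZH) \ {Q}) :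
    ∃ (S : Fin 2 → Finset ℂ) (Q' : Fin 2 → ℂ), (∀ l, (S l).card = a) ∧
      ∀ (F : R4) (m t : ℕ), F ∈ symbPow Z m → F ≠ 0 → IsBiForm F t t →
        ∃ f : A2, f ≠ 0 ∧ degreeOf 0 f ≤ t ∧ degreeOf 1 f ≤ t ∧ GridVan S Q' f m := by
  obtain ⟨r0, hr0⟩ := exists_chart ZV
  obtain ⟨r1, hr1⟩ := exists_chart ZH
  rw [Finset.mem_product] at hQ
  refine ⟨![ZV.image (aff r0), ZH.image (aff r1)], affPt ![r0, r1] Q, ?_, ?_⟩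
  · intro l
    fin_cases l
    · simp only [Fin.zero_eta, Matrix.cons_val_zero]
      rw [Finset.card_image_of_injOn, hV]
      exact fun p hp q hq h => aff_inj (hr0 p hp) (hr0 q hq) h
    · simp only [Fin.mk_one, Matrix.cons_val_one, Matrix.cons_val_fin_one]
      rw [Finset.card_image_of_injOn, hH]
      exact fun p hp q hq h => aff_inj (hr1 p hp) (hr1 q hq) h
  · intro F m t hF h0 hb
    refine ⟨dehom ![r0, r1] F, dehom_ne_zero hb h0 _, (dehom_degree hb _).1,
      (dehom_degree hb _).2, ?_⟩
    intro s hs hsQ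
    have hs0 := hs 0
    have hs1 := hs 1
    simp only [Matrix.cons_val_zero, Matrix.cons_val_one, Matrix.cons_val_fin_one,
      Finset.mem_image] at hs0 hs1
    obtain ⟨p, hp, hps⟩ := hs0
    obtain ⟨q, hq, hqs⟩ := hs1
    have hsP : s = affPt ![r0, r1] (p, q) := by
      funext l
      fin_cases l
      · simp [affPt, hps]
      · simp [affPt, hqs]
    subst hsP
    have hPZ : (p, q) ∈ Z := by
      have : (p, q) ∈ (Z : Set (ProjLine × ProjLine)) := by
        rw [hZ]
        refine ⟨by simp [hp, hq], ?_⟩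
        rintro rfl
        exact hsQ rfl
      exact this
    refine dehom_vanOrd _ (p, q) (hr0 p hp) (hr1 q hq) F m ?_
    have := (Submodule.mem_iInf _).1 hF (p, q)
    exact (Submodule.mem_iInf _).1 this hPZ

/-- The two families of line forms. -/
def vLine (p : ProjLine) : R4 := C (p.rep 1) * X (Sum.inl 0) - C (p.rep 0) * X (Sum.inl 1)

/-- Horizontal lines. -/
def hLine (p : ProjLine) : R4 := C (p.rep 1) * X (Sum.inr 0) - C (p.rep 0) * X (Sum.inr 1)

theorem rep_sq_ne (p : ProjLine) : ∃ x : Fin 2 → ℂ, p.rep 1 * x 0 - p.rep 0 * x 1 ≠ 0 := by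
  by_cases h0 : p.rep 0 = 0
  · refine ⟨![1, 0], fun h => p.rep_nonzero ?_⟩
    simp at h
    funext l
    fin_cases l <;> simp [h0, h]
  · exact ⟨![0, 1], by simpa using h0⟩

theorem vLine_ne (p : ProjLine) : vLine p ≠ 0 := by
  intro h
  obtain ⟨x, hx⟩ := rep_sq_ne p
  have := congrArg (MvPolynomial.eval (Sum.elim x x)) h
  apply hx
  simpa [vLine] using this

theorem hLine_ne (p : ProjLine) : hLine p ≠ 0 := by
  intro h
  obtain ⟨x, hx⟩ := rep_sq_ne p
  have := congrArg (MvPolynomial.eval (Sum.elim x x)) h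
  apply hx
  simpa [hLine] using this

theorem vLine_form (p : ProjLine) : IsBiForm (vLine p) 1 0 :=
  ((isWeightedHomogeneous_X ℂ biWeight (Sum.inl 0)).C_mul _).sub
    ((isWeightedHomogeneous_X ℂ biWeight (Sum.inl 1)).C_mul _)

theorem hLine_form (p : ProjLine) : IsBiForm (hLine p) 0 1 :=
  ((isWeightedHomogeneous_X ℂ biWeight (Sum.inr 0)).C_mul _).sub
    ((isWeightedHomogeneous_X ℂ biWeight (Sum.inr 1)).C_mul _)

theorem exists_form (ZV ZH : Finset ProjLine) (Z : Finset (ProjLine × ProjLine))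
    (hZ : Z ⊆ ZV ×ˢ ZH) (m t : ℕ) (e e' : ProjLine → ℕ)
    (he : ∑ p ∈ ZV, e p = t) (he' : ∑ p ∈ ZH, e' p = t) (hm : ∀ P ∈ Z, m ≤ e P.1 + e' P.2) :
    ∃ F ∈ symbPow Z m, F ≠ 0 ∧ IsBiForm F t t := by
  refine ⟨(∏ p ∈ ZV, vLine p ^ e p) * ∏ p ∈ ZH, hLine p ^ e' p, ?_, ?_, ?_⟩
  · refine (Submodule.mem_iInf _).2 fun P => (Submodule.mem_iInf _).2 fun hP => ?_
    have hP' := Finset.mem_product.1 (hZ hP)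
    refine Ideal.pow_le_pow_right (hm P hP) ?_
    rw [pow_add]
    refine Ideal.mul_mem_mul ?_ ?_
    · refine Ideal.mem_of_dvd _ (Finset.dvd_prod_of_mem _ hP'.1) (Ideal.pow_mem_pow ?_ _)
      exact Ideal.subset_span (Or.inl rfl)
    · refine Ideal.mem_of_dvd _ (Finset.dvd_prod_of_mem _ hP'.2) (Ideal.pow_mem_pow ?_ _)
      exact Ideal.subset_span (Or.inr rfl)
  · exact mul_ne_zero (Finset.prod_ne_zero_iff.2 fun p _ => pow_ne_zero _ (vLine_ne p))
      (Finset.prod_ne_zero_iff.2 fun p _ => pow_ne_zero _ (hLine_ne p))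
  · have h1 := IsWeightedHomogeneous.prod ZV (fun p => vLine p ^ e p) (fun p => e p • (1, 0))
      (fun p _ => (vLine_form p).pow (e p))
    have h2 := IsWeightedHomogeneous.prod ZH (fun p => hLine p ^ e' p) (fun p => e' p • (0, 1))
      (fun p _ => (hLine_form p).pow (e' p))
    have h3 := h1.mul h2
    rw [← Finset.sum_smul, ← Finset.sum_smul, he, he'] at h3
    simpa [IsBiForm] using h3

theorem sum_drop [DecidableEq ProjLine] (Z : Finset ProjLine) (q : ProjLine) (hq : q ∈ Z) (k : ℕ) :
    ∑ p ∈ Z, (if p = q then k else k + 1) = (k + 1) * Z.card - 1 := by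
  rw [← Finset.add_sum_erase _ _ hq, if_pos rfl,
    Finset.sum_congr rfl (fun p hp => if_neg (Finset.ne_of_mem_erase hp)), Finset.sum_const,
    Finset.card_erase_of_mem hq, smul_eq_mul]
  have : 0 < Z.card := Finset.card_pos.2 ⟨q, hq⟩
  obtain ⟨n, hn⟩ : ∃ n, Z.card = n + 1 := ⟨Z.card - 1, by omega⟩
  rw [hn, Nat.add_sub_cancel]
  have : (k + 1) * (n + 1) = n * (k + 1) + k + 1 := by ring
  omega

theorem alphaStar_eq (J : Ideal R4) (t : ℕ) (h1 : ∃ F ∈ J, F ≠ 0 ∧ IsBiForm F t t)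
    (h2 : ∀ s, ∀ F ∈ J, F ≠ 0 → IsBiForm F s s → t ≤ s) : alphaStar J = t := by
  apply le_antisymm
  · exact Nat.sInf_le h1
  · exact le_csInf ⟨t, h1⟩ fun s ⟨F, hF, h0, hb⟩ => h2 s F hF h0 hb

/-- For `a ≥ 5` and `Z` an `(a,a)`-grid in `ℙ¹ × ℙ¹` minus a single point `Q`, with radical
ideal `I`, one has `α*(I^{(2k-1)}) = ka - 1` and `α*(I^{(2k)}) = ka` for all `k ≥ 1`.
In particular `α*(I) = a - 1`. -/
theorem alphaStar_grid_minus_point (a : ℕ) (ha : 5 ≤ a)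
    (ZV ZH : Finset ProjLine) (hV : ZV.card = a) (hH : ZH.card = a)
    (Q : ProjLine × ProjLine) (hQ : Q ∈ ZV ×ˢ ZH)
    (Z : Finset (ProjLine × ProjLine))
    (hZ : (Z : Set (ProjLine × ProjLine)) = ↑(ZV ×ˢ ZH) \ {Q}) :
    (∀ k : ℕ, 1 ≤ k →
        alphaStar (symbPow Z (2 * k - 1)) = k * a - 1 ∧
        alphaStar (symbPow Z (2 * k)) = k * a) ∧
    alphaStar (symbPow Z 1) = a - 1 := by
  classical
  obtain ⟨S, Q', hS, haff⟩ := to_affine ZV ZH hV hH Q hQ Z hZ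
  have hQ' := Finset.mem_product.1 hQ
  have hsub : Z ⊆ ZV ×ˢ ZH := by
    intro P hP
    have : P ∈ (Z : Set (ProjLine × ProjLine)) := hP
    rw [hZ] at this
    exact this.1
  have hneQ : ∀ P ∈ Z, P ≠ Q := by
    intro P hP
    have : P ∈ (Z : Set (ProjLine × ProjLine)) := hP
    rw [hZ] at this
    exact this.2
  have main : ∀ k : ℕ, 1 ≤ k →
        alphaStar (symbPow Z (2 * k - 1)) = k * a - 1 ∧
        alphaStar (symbPow Z (2 * k)) = k * a := by
    intro k hk
    obtain ⟨n, rfl⟩ : ∃ n, k = n + 1 := ⟨k - 1, by omega⟩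
    constructor
    · rw [show 2 * (n + 1) - 1 = 2 * n + 1 by omega]
      apply alphaStar_eq
      · refine exists_form ZV ZH Z hsub _ _ (fun p => if p = Q.1 then n else n + 1)
          (fun p => if p = Q.2 then n else n + 1) ?_ ?_ ?_
        · rw [sum_drop _ _ hQ'.1, hV]
        · rw [sum_drop _ _ hQ'.2, hH]
        · intro P hP
          by_cases h1 : P.1 = Q.1
          · by_cases h2 : P.2 = Q.2
            · exact absurd (Prod.ext h1 h2) (hneQ P hP)
            · simp only [h1, h2, if_true, if_false]
              omega
          · simp only [h1, if_false]
            split_ifs <;> omega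
      · intro s F hF h0 hb
        obtain ⟨f, hf, hd0, hd1, hv⟩ := haff F _ s hF h0 hb
        have := odd_bound (by omega) S hS Q' n f hf s hv hd0 hd1
        omega
    · apply alphaStar_eq
      · refine exists_form ZV ZH Z hsub _ _ (fun _ => n + 1) (fun _ => n + 1) ?_ ?_ ?_
        · rw [Finset.sum_const, hV, smul_eq_mul, mul_comm]
        · rw [Finset.sum_const, hH, smul_eq_mul, mul_comm]
        · intro P _
          omega
      · intro s F hF h0 hb
        obtain ⟨f, hf, hd0, hd1, hv⟩ := haff F _ s hF h0 hb
        exact even_bound (by omega) S hS Q' (n + 1) f hf s hv hd0 hd1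
  refine ⟨main, ?_⟩
  simpa using (main 1 le_rfl).1
end
end
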